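/- Let R be a commutative noetherian ring with identity and a a proper ideal of R with dim R/a ≤ 2, and let M be an R-module with Supp_R M ⊆ V(a). Then M is a-cofinite if and only if Hom_R(R/a, M), Ext^1_R(R/a, M) and Ext^2_R(R/a, M) are finitely generated R-modules. -/

import Mathlib

universe u

open CategoryTheory

/-- `Ext^i_R(R/a, M)` as an `R`-module, for `M : ModuleCat R`. -/
noncomputable def extQuot {R : Type u} [CommRing R] (a : Ideal R) (i : ℕ)
    (M : ModuleCat.{u} R) : ModuleCat.{u} R :=
  ((Ext R (ModuleCat.{u} R) i).obj (Opposite.op (ModuleCat.of R (R ⧸ a)))).obj M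

/-- An `R`-module `M` is `a`-cofinite if `Supp M ⊆ V(a)` and `Ext^i_R(R/a, M)` is a
finitely generated `R`-module for every `i ≥ 0`. -/
def IsCofinite {R : Type u} [CommRing R] (a : Ideal R) (M : ModuleCat.{u} R) : Prop :=
  Module.support R M ⊆ PrimeSpectrum.zeroLocus (a : Set R) ∧
    ∀ i : ℕ, Module.Finite R (extQuot a i M)

namespace Cof
open CategoryTheory.Abelian

section ext
variable (R : Type u) [CommRing R]

/-- `Ext` between unbundled modules. -/
abbrev E (N M : Type u) [AddCommGroup N] [Module R N] [AddCommGroup M] [Module R M] (i : ℕ) :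
    Type u :=
  CategoryTheory.Abelian.Ext (ModuleCat.of R N) (ModuleCat.of R M) i

variable {R}
variable {N N' N'' M A B C : Type u} [AddCommGroup N] [Module R N] [AddCommGroup M] [Module R M]
  [AddCommGroup N'] [Module R N'] [AddCommGroup N''] [Module R N'']
  [AddCommGroup A] [Module R A] [AddCommGroup B] [Module R B] [AddCommGroup C] [Module R C]

variable (N) in
/-- Covariant functoriality. -/
noncomputable def cov (f : A →ₗ[R] B) (i : ℕ) : E R N A i →ₗ[R] E R N B i :=
  (Abelian.Ext.mk₀ (ModuleCat.ofHom f)).postcompOfLinear R (ModuleCat.of R N) (add_zero i)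

variable (M) in
/-- Contravariant functoriality. -/
noncomputable def con (f : A →ₗ[R] B) (i : ℕ) : E R B M i →ₗ[R] E R A M i :=
  (Abelian.Ext.mk₀ (ModuleCat.ofHom f)).precompOfLinear R (ModuleCat.of R M) (zero_add i)

lemma cov_apply (f : A →ₗ[R] B) (i : ℕ) (x : E R N A i) :
    cov N f i x = x.comp (Abelian.Ext.mk₀ (ModuleCat.ofHom f)) (add_zero i) := rfl

lemma con_apply (f : A →ₗ[R] B) (i : ℕ) (x : E R B M i) :
    con M f i x = (Abelian.Ext.mk₀ (ModuleCat.ofHom f)).comp x (zero_add i) := rfl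

lemma cov_comp (f : A →ₗ[R] B) (g : B →ₗ[R] C) (i : ℕ) (x : E R N A i) :
    cov N g i (cov N f i x) = cov N (g ∘ₗ f) i x := by
  simp [cov_apply, Abelian.Ext.mk₀_comp_mk₀]

lemma con_comp (f : A →ₗ[R] B) (g : B →ₗ[R] C) (i : ℕ) (x : E R C M i) :
    con M f i (con M g i x) = con M (g ∘ₗ f) i x := by
  simp [con_apply]

lemma cov_smul (y : R) (i : ℕ) (x : E R N M i) :
    cov N (y • LinearMap.id : M →ₗ[R] M) i x = y • x := by
  rw [cov_apply, show ModuleCat.ofHom (y • LinearMap.id : M →ₗ[R] M) = y • 𝟙 (ModuleCat.of R M) from rfl, Abelian.Ext.mk₀_smul, Abelian.Ext.comp_smul]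
  congr 1
  exact Abelian.Ext.comp_mk₀_id x

lemma con_smul (y : R) (i : ℕ) (x : E R N M i) :
    con M (y • LinearMap.id : N →ₗ[R] N) i x = y • x := by
  rw [con_apply, show ModuleCat.ofHom (y • LinearMap.id : N →ₗ[R] N) = y • 𝟙 (ModuleCat.of R N) from rfl, Abelian.Ext.mk₀_smul, Abelian.Ext.smul_comp]
  congr 1
  exact Abelian.Ext.mk₀_id_comp x

/-- The short complex. -/
noncomputable abbrev sc (f : A →ₗ[R] B) (g : B →ₗ[R] C) (h : Function.Exact f g) :
    ShortComplex (ModuleCat.{u} R) :=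
  ModuleCat.shortComplexOfCompEqZero f g h.linearMap_comp_eq_zero

lemma sc_exact (f : A →ₗ[R] B) (g : B →ₗ[R] C) (hf : Function.Injective f)
    (h : Function.Exact f g) (hg : Function.Surjective g) : (sc f g h).ShortExact where
  exact := (ShortComplex.ShortExact.moduleCat_exact_iff_function_exact _).mpr h
  mono_f := (ModuleCat.mono_iff_injective _).mpr hf
  epi_g := (ModuleCat.epi_iff_surjective _).mpr hg

lemma cov_exact₂ (f : A →ₗ[R] B) (g : B →ₗ[R] C) (hf : Function.Injective f)
    (h : Function.Exact f g) (hg : Function.Surjective g) (i : ℕ) :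
    Function.Exact (cov N f i) (cov N g i) := by
  intro x
  constructor
  · intro hx
    obtain ⟨y, hy⟩ := Abelian.Ext.covariant_sequence_exact₂ _ (sc_exact f g hf h hg) x hx
    exact ⟨y, hy⟩
  · rintro ⟨y, rfl⟩
    rw [cov_comp, h.linearMap_comp_eq_zero]
    simp [cov_apply]

lemma cov_exact₃ (f : A →ₗ[R] B) (g : B →ₗ[R] C) (hf : Function.Injective f)
    (h : Function.Exact f g) (hg : Function.Surjective g) (i : ℕ) :
    ∃ δ : E R N C i →ₗ[R] E R N A (i + 1),
      Function.Exact (cov N g i) δ ∧ Function.Exact δ (cov N f (i + 1)) := by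
  have S := sc_exact f g hf h hg
  refine ⟨S.extClass.postcompOfLinear R (ModuleCat.of R N) rfl, ?_, ?_⟩
  · intro x
    constructor
    · intro hx
      obtain ⟨y, hy⟩ := Abelian.Ext.covariant_sequence_exact₃ _ S x rfl hx
      exact ⟨y, hy⟩
    · rintro ⟨y, rfl⟩
      change (y.comp (Abelian.Ext.mk₀ (sc f g h).g) (add_zero i)).comp S.extClass rfl = 0
      rw [Abelian.Ext.comp_assoc_of_second_deg_zero, S.comp_extClass, Abelian.Ext.comp_zero]
  · intro x
    constructor
    · intro hx
      obtain ⟨y, hy⟩ := Abelian.Ext.covariant_sequence_exact₁ _ S x hx rfl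
      exact ⟨y, hy⟩
    · rintro ⟨y, rfl⟩
      change (y.comp S.extClass rfl).comp (Abelian.Ext.mk₀ (sc f g h).f) (add_zero _) = 0
      rw [Abelian.Ext.comp_assoc_of_third_deg_zero, S.extClass_comp, Abelian.Ext.comp_zero]

lemma cov_inj (f : A →ₗ[R] B) (hf : Function.Injective f) : Function.Injective (cov N f 0) := by
  have : Mono (ModuleCat.ofHom f) := (ModuleCat.mono_iff_injective _).mpr hf
  exact Abelian.Ext.postcomp_mk₀_injective_of_mono (ModuleCat.of R N) (ModuleCat.ofHom f)

lemma con_exact₂ (f : A →ₗ[R] B) (g : B →ₗ[R] C) (hf : Function.Injective f)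
    (h : Function.Exact f g) (hg : Function.Surjective g) (i : ℕ) :
    Function.Exact (con M g i) (con M f i) := by
  intro x
  constructor
  · intro hx
    obtain ⟨y, hy⟩ := Abelian.Ext.contravariant_sequence_exact₂ (sc_exact f g hf h hg) _ x hx
    exact ⟨y, hy⟩
  · rintro ⟨y, rfl⟩
    rw [con_comp, h.linearMap_comp_eq_zero]
    simp [con_apply]

lemma con_exact₃ (f : A →ₗ[R] B) (g : B →ₗ[R] C) (hf : Function.Injective f)
    (h : Function.Exact f g) (hg : Function.Surjective g) (i : ℕ) :
    ∃ δ : E R A M i →ₗ[R] E R C M (i + 1),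
      Function.Exact (con M f i) δ ∧ Function.Exact δ (con M g (i + 1)) := by
  have S := sc_exact f g hf h hg
  refine ⟨S.extClass.precompOfLinear R (ModuleCat.of R M) (add_comm 1 i), ?_, ?_⟩
  · intro x
    constructor
    · intro hx
      obtain ⟨y, hy⟩ := Abelian.Ext.contravariant_sequence_exact₁ S _ x (add_comm 1 i) hx
      exact ⟨y, hy⟩
    · rintro ⟨y, rfl⟩
      change S.extClass.comp ((Abelian.Ext.mk₀ (sc f g h).f).comp y (zero_add i)) (add_comm 1 i) = 0
      rw [← Abelian.Ext.comp_assoc_of_second_deg_zero, S.extClass_comp, Abelian.Ext.zero_comp]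
  · intro x
    constructor
    · intro hx
      obtain ⟨y, hy⟩ := Abelian.Ext.contravariant_sequence_exact₃ S _ x hx (add_comm 1 i)
      exact ⟨y, hy⟩
    · rintro ⟨y, rfl⟩
      change (Abelian.Ext.mk₀ (sc f g h).g).comp (S.extClass.comp y (add_comm 1 i)) (zero_add _) = 0
      rw [← Abelian.Ext.comp_assoc (a₂₃ := i + 1) (a₁₂ := 1) _ _ _ (by omega) (by omega) (by omega), S.comp_extClass, Abelian.Ext.zero_comp]

lemma con_inj (f : A →ₗ[R] B) (hf : Function.Surjective f) : Function.Injective (con M f 0) := by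
  have : Epi (ModuleCat.ofHom f) := (ModuleCat.epi_iff_surjective _).mpr hf
  exact Abelian.Ext.precomp_mk₀_injective_of_epi (ModuleCat.of R M) (ModuleCat.ofHom f)

variable (R N M) in
/-- Degree zero. -/
noncomputable def e0 : E R N M 0 ≃ₗ[R] (N →ₗ[R] M) :=
  Abelian.Ext.linearEquiv₀.trans ModuleCat.homLinearEquiv

lemma e0_con (f : A →ₗ[R] B) (x : E R B M 0) : e0 R A M (con M f 0 x) = (e0 R B M x) ∘ₗ f := by
  obtain ⟨g, rfl⟩ := (e0 R B M).symm.surjective x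
  rw [LinearEquiv.apply_symm_apply]
  apply (e0 R A M).symm.injective
  rw [LinearEquiv.symm_apply_apply]
  change con M f 0 (Abelian.Ext.mk₀ (ModuleCat.ofHom g)) = Abelian.Ext.mk₀ (ModuleCat.ofHom (g ∘ₗ f))
  rw [con_apply, Abelian.Ext.mk₀_comp_mk₀]
  rfl

lemma proj_zero [Module.Projective R N] (i : ℕ) : Subsingleton (E R N M (i + 1)) := by
  refine ⟨fun x y => ?_⟩
  rw [Abelian.Ext.eq_zero_of_projective x, Abelian.Ext.eq_zero_of_projective y]

lemma fin_ext [IsNoetherianRing R] [Module.Finite R N] [Module.Finite R M] (i : ℕ) :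
    Module.Finite R (E R N M i) := by
  have : Module.Finite R (ModuleCat.of R N) := ‹_›
  have : Module.Finite R (ModuleCat.of R M) := ‹_›
  exact ModuleCat.finite_ext R _ _ i

end ext
end Cof

namespace Cof

/-- A Serre class of modules containing the finite modules. -/
structure SC (R : Type u) [CommRing R] where
  mem : ∀ (X : Type u) [AddCommGroup X] [Module R X], Prop
  ex : ∀ {X Y Z : Type u} [AddCommGroup X] [Module R X] [AddCommGroup Y] [Module R Y]
    [AddCommGroup Z] [Module R Z] (f : X →ₗ[R] Y) (g : Y →ₗ[R] Z), Function.Exact f g →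
    mem X → mem Z → mem Y
  fin : ∀ (X : Type u) [AddCommGroup X] [Module R X], Module.Finite R X → mem X

/-- The finite modules. -/
def fgSC (R : Type u) [CommRing R] [IsNoetherianRing R] : SC R where
  mem X _ _ := Module.Finite R X
  ex {X Y Z} _ _ _ _ _ _ f g h hX hZ := by
    have : Module.Finite R (LinearMap.ker g) := by
      rw [h.linearMap_ker_eq]
      exact Module.Finite.range f
    have h2 : Module.Finite R (LinearMap.range g) := inferInstance
    have e : (Y ⧸ LinearMap.ker g) ≃ₗ[R] LinearMap.range g := g.quotKerEquivRange
    have := Module.Finite.equiv e.symm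
    exact Module.Finite.of_submodule_quotient (LinearMap.ker g)
  fin X _ _ h := h

/-- Elements are killed by powers of `a`. -/
def ATor {R : Type u} [CommRing R] (a : Ideal R) (M : Type u) [AddCommGroup M] [Module R M] : Prop :=
  ∀ m : M, ∃ n : ℕ, ∀ r ∈ a ^ n, r • m = 0

section
variable {R : Type u} [CommRing R]
variable {N M X Y A B : Type u} [AddCommGroup N] [Module R N] [AddCommGroup M] [Module R M]
  [AddCommGroup X] [Module R X] [AddCommGroup Y] [Module R Y]
  [AddCommGroup A] [Module R A] [AddCommGroup B] [Module R B]

lemma ATor.inj {a : Ideal R} (h : ATor a Y) (f : X →ₗ[R] Y) (hf : Function.Injective f) :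
    ATor a X := by
  intro m
  obtain ⟨n, hn⟩ := h (f m)
  refine ⟨n, fun r hr => hf ?_⟩
  rw [map_smul, hn r hr, map_zero]

lemma ATor.surj {a : Ideal R} (h : ATor a X) (f : X →ₗ[R] Y) (hf : Function.Surjective f) :
    ATor a Y := by
  intro m
  obtain ⟨x, rfl⟩ := hf m
  obtain ⟨n, hn⟩ := h x
  refine ⟨n, fun r hr => ?_⟩
  rw [← map_smul, hn r hr, map_zero]

lemma ATor.mono {a b : Ideal R} (hb : b ≤ a) (h : ATor a X) : ATor b X := by
  intro m
  obtain ⟨n, hn⟩ := h m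
  exact ⟨n, fun r hr => hn r (Ideal.pow_right_mono hb n hr)⟩

lemma ATor.quot (a : Ideal R) : ATor a (R ⧸ a) := by
  intro m
  obtain ⟨x, rfl⟩ := Ideal.Quotient.mk_surjective m
  refine ⟨1, fun r hr => ?_⟩
  rw [pow_one] at hr
  rw [← Ideal.Quotient.mk_eq_mk, ← Submodule.Quotient.mk_smul]
  exact (Submodule.Quotient.mk_eq_zero _).2 (a.mul_mem_right _ hr)

lemma ATor.quot_prime {a p : Ideal R} [p.IsPrime] (h : ATor a (R ⧸ p)) : a ≤ p := by
  obtain ⟨n, hn⟩ := h (Ideal.Quotient.mk p 1)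
  have : a ^ n ≤ p := by
    intro r hr
    have := hn r hr
    rw [← Ideal.Quotient.mk_eq_mk, ← Submodule.Quotient.mk_smul, Submodule.Quotient.mk_eq_zero] at this
    simpa using this
  exact Ideal.IsPrime.le_of_pow_le this

variable (C : SC R)

lemma SC.inj {C : SC R} (h : C.mem Y) (f : X →ₗ[R] Y) (hf : Function.Injective f) : C.mem X := by
  refine C.ex (0 : PUnit.{u+1} →ₗ[R] X) f ?_ (C.fin _ inferInstance) h
  intro x
  constructor
  · intro hx
    exact ⟨0, by rw [hf (hx.trans (map_zero f).symm)]; rfl⟩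
  · rintro ⟨y, rfl⟩
    simp

lemma SC.surj {C : SC R} (h : C.mem X) (f : X →ₗ[R] Y) (hf : Function.Surjective f) : C.mem Y := by
  refine C.ex f (0 : Y →ₗ[R] PUnit.{u+1}) ?_ h (C.fin _ inferInstance)
  intro x
  simp [hf x]

lemma SC.equiv {C : SC R} (h : C.mem X) (f : X ≃ₗ[R] Y) : C.mem Y := SC.surj h f.toLinearMap f.surjective

lemma SC.zero [Subsingleton X] : C.mem X := C.fin X inferInstance

lemma SC.pi {C : SC R} (h : C.mem X) (n : ℕ) : C.mem (Fin n → X) := by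
  induction n with
  | zero => exact SC.zero C
  | succ n ih =>
    refine C.ex (Fin.consLinearEquiv R (fun _ : Fin (n+1) => X) ∘ₗ LinearMap.inr R X (Fin n → X))
      (LinearMap.proj 0) ?_ ih h
    intro x
    constructor
    · intro hx
      refine ⟨Fin.tail x, ?_⟩
      have : x 0 = 0 := hx
      simp only [LinearMap.coe_comp, LinearEquiv.coe_coe, Function.comp_apply, LinearMap.inr_apply]
      rw [← this]
      exact Fin.cons_self_tail x
    · rintro ⟨y, rfl⟩
      simp

/-- Ext of a finite module into a member is a member. -/
lemma SC.ext [IsNoetherianRing R] {C : SC R} (h : C.mem X) [hN : Module.Finite R N] (j : ℕ) :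
    C.mem (E R N X j) := by
  induction j generalizing N with
  | zero =>
    obtain ⟨n, f, hf⟩ := Module.Finite.exists_fin' R N
    have h1 : C.mem ((Fin n → R) →ₗ[R] X) := SC.equiv (SC.pi h n)
      ((LinearMap.lsum R (fun _ : Fin n => R) R).symm.trans
        (LinearEquiv.piCongrRight fun _ => LinearMap.ringLmapEquivSelf R R X) |>.symm)
    exact SC.inj (SC.equiv h1 (e0 R _ X).symm) (con X f 0) (con_inj f hf)
  | succ j ih =>
    obtain ⟨n, f, hf⟩ := Module.Finite.exists_fin' R N
    have : Module.Finite R (LinearMap.ker f) := inferInstance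
    obtain ⟨δ, h1, h2⟩ := con_exact₃ (M := X) (LinearMap.ker f).subtype f
      (Submodule.injective_subtype _) (LinearMap.exact_subtype_ker_map f) hf j
    have := proj_zero (R := R) (N := Fin n → R) (M := X) j
    exact C.ex δ _ h2 ih (SC.zero C)

lemma SC.lesCov₂ {C : SC R} (f : A →ₗ[R] B) (g : B →ₗ[R] X) (hf : Function.Injective f)
    (h : Function.Exact f g) (hg : Function.Surjective g) (i : ℕ) (h1 : C.mem (E R N A i))
    (h3 : C.mem (E R N X i)) : C.mem (E R N B i) :=
  C.ex _ _ (cov_exact₂ f g hf h hg i) h1 h3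

lemma SC.lesCov₃ {C : SC R} (f : A →ₗ[R] B) (g : B →ₗ[R] X) (hf : Function.Injective f)
    (h : Function.Exact f g) (hg : Function.Surjective g) (i : ℕ) (h1 : C.mem (E R N B i))
    (h3 : C.mem (E R N A (i + 1))) : C.mem (E R N X i) := by
  obtain ⟨δ, h4, h5⟩ := cov_exact₃ (N := N) f g hf h hg i
  exact C.ex _ _ h4 h1 h3

lemma SC.lesCov₁ {C : SC R} (f : A →ₗ[R] B) (g : B →ₗ[R] X) (hf : Function.Injective f)
    (h : Function.Exact f g) (hg : Function.Surjective g) (i : ℕ) (h1 : C.mem (E R N X i))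
    (h3 : C.mem (E R N B (i + 1))) : C.mem (E R N A (i + 1)) := by
  obtain ⟨δ, h4, h5⟩ := cov_exact₃ (N := N) f g hf h hg i
  exact C.ex _ _ h5 h1 h3

lemma SC.lesCov₀ {C : SC R} (f : A →ₗ[R] B) (hf : Function.Injective f)
    (h1 : C.mem (E R N B 0)) : C.mem (E R N A 0) := SC.inj h1 _ (cov_inj f hf)

/-- Lemma A. -/
lemma lemmaA [IsNoetherianRing R] {C : SC R} {a : Ideal R} {d : ℕ}
    (h : ∀ i ≤ d, C.mem (E R (R ⧸ a) M i)) (i : ℕ) (hi : i ≤ d) [hN : Module.Finite R N]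
    (ht : ATor a N) : C.mem (E R N M i) := by
  induction i using Nat.strong_induction_on generalizing N with
  | _ i ih =>
    revert ht
    induction hN using IsNoetherianRing.induction_on_isQuotientEquivQuotientPrime R with
    | subsingleton N =>
      intro _
      exact SC.surj (C.zero (X := M →ₗ[R] PUnit.{u+1})) 0 fun x => ⟨0, by
        have : con M (0 : N →ₗ[R] N) i x = x := by
          rw [Subsingleton.elim (0 : N →ₗ[R] N) ((1:R) • LinearMap.id), con_smul, one_smul]
        rw [← this]; simp [con_apply]⟩
    | quotient N p e =>
      intro ht
      have hp := p.2
      have hap : a ≤ p.1 := (ht.surj e.toLinearMap e.surjective).quot_prime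
      let g : (R ⧸ a) →ₗ[R] N := e.symm.toLinearMap ∘ₗ Submodule.factor hap
      have hg : Function.Surjective g := e.symm.surjective.comp (Submodule.factor_surjective hap)
      cases i with
      | zero =>
        exact SC.inj (h 0 hi) _ (con_inj (M := M) g hg)
      | succ i =>
        have : Module.Finite R (LinearMap.ker g) := inferInstance
        obtain ⟨δ, h1, h2⟩ := con_exact₃ (M := M) (LinearMap.ker g).subtype g
          (Submodule.injective_subtype _) (LinearMap.exact_subtype_ker_map g) hg i
        refine C.ex δ _ h2 (ih i (by omega) (by omega) ?_) (h _ hi)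
        exact (ATor.quot a).inj _ (Submodule.injective_subtype _)
    | exact N₁ N₂ N₃ f g hf hg hfg h1 h3 =>
      intro ht
      exact C.ex _ _ (con_exact₂ f g hf hfg hg i) (h3 (ht.surj g hg)) (h1 (ht.inj f hf))

/-- multiplication by `y` -/
abbrev ml (y : R) (M : Type u) [AddCommGroup M] [Module R M] : M →ₗ[R] M := y • LinearMap.id

/-- `0 :_M y` -/
abbrev tor (y : R) (M : Type u) [AddCommGroup M] [Module R M] := LinearMap.ker (ml y M)

/-- `M / y M` -/
abbrev quo (y : R) (M : Type u) [AddCommGroup M] [Module R M] := M ⧸ LinearMap.range (ml y M)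

lemma ml_fac (y : R) : (LinearMap.range (ml y M)).subtype ∘ₗ (ml y M).rangeRestrict = ml y M := rfl

lemma SC.Y1 {C : SC R} (y : R) (hy : ∀ n : N, y • n = 0) (i : ℕ) (h1 : C.mem (E R N (tor y M) i))
    (h2 : ∀ j, j + 1 = i → C.mem (E R N (quo y M) j)) : C.mem (E R N M i) := by
  have hz : ∀ x : E R N M i, y • x = 0 := by
    intro x
    rw [← con_smul, show (y • LinearMap.id : N →ₗ[R] N) = 0 by ext n; simp [hy]]
    simp [con_apply]
  have hK : C.mem (LinearMap.ker (cov N (LinearMap.range (ml y M)).subtype i)) := by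
    cases i with
    | zero =>
      have : LinearMap.ker (cov N (LinearMap.range (ml y M)).subtype 0) = ⊥ :=
        LinearMap.ker_eq_bot.2 (cov_inj _ (Submodule.injective_subtype _))
      rw [this]
      exact C.zero
    | succ j =>
      obtain ⟨δ, h4, h5⟩ := cov_exact₃ (N := N) (LinearMap.range (ml y M)).subtype
        (LinearMap.range (ml y M)).mkQ (Submodule.injective_subtype _)
        (LinearMap.exact_subtype_mkQ _) (Submodule.mkQ_surjective _) j
      rw [h5.linearMap_ker_eq]
      exact SC.surj (h2 j rfl) _ δ.surjective_rangeRestrict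
  have h3 := cov_exact₂ (N := N) (tor y M).subtype (ml y M).rangeRestrict
    (Submodule.injective_subtype _) (by
      intro x
      simp [Subtype.ext_iff]) (LinearMap.surjective_rangeRestrict _) i
  refine C.ex (Y := E R N M i) (cov N (tor y M).subtype i) ((cov N (ml y M).rangeRestrict i).codRestrict
    (LinearMap.ker (cov N (LinearMap.range (ml y M)).subtype i)) ?_) ?_ h1 hK
  · intro x
    rw [LinearMap.mem_ker, cov_comp, ml_fac, cov_smul, hz]
  · intro x
    rw [← h3 x]
    simp [Subtype.ext_iff]

lemma SC.Y2 [IsNoetherianRing R] {C : SC R} (y : R) (a : Ideal R)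
    (h : ∀ (j : ℕ) (N : Type u) [AddCommGroup N] [Module R N], Module.Finite R N → ATor a N →
      (∀ n : N, y • n = 0) → C.mem (E R N M j)) (j : ℕ) [Module.Finite R N] (hN : ATor a N) :
    C.mem (tor y (E R N M j)) := by
  have hK : C.mem (LinearMap.ker (con M (ml y N).rangeRestrict j)) := by
    cases j with
    | zero =>
      have : LinearMap.ker (con M (ml y N).rangeRestrict 0) = ⊥ :=
        LinearMap.ker_eq_bot.2 (con_inj _ (LinearMap.surjective_rangeRestrict _))
      rw [this]
      exact C.zero
    | succ j =>
      obtain ⟨δ, h4, h5⟩ := con_exact₃ (M := M) (tor y N).subtype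
        (ml y N).rangeRestrict (Submodule.injective_subtype _)
        (by intro x; simp [Subtype.ext_iff]) (LinearMap.surjective_rangeRestrict _) j
      rw [h5.linearMap_ker_eq]
      refine SC.surj (h j (tor y N) inferInstance (hN.inj _ (Submodule.injective_subtype _)) ?_)
        _ δ.surjective_rangeRestrict
      rintro ⟨n, hn⟩
      ext
      simpa using hn
  have h3 := con_exact₂ (M := M) (LinearMap.range (ml y N)).subtype
        (LinearMap.range (ml y N)).mkQ (Submodule.injective_subtype _)
        (LinearMap.exact_subtype_mkQ _) (Submodule.mkQ_surjective _) j
  have hq : C.mem (E R (quo y N) M j) := by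
    refine h j _ inferInstance (hN.surj _ (Submodule.mkQ_surjective _)) ?_
    intro n
    obtain ⟨n, rfl⟩ := Submodule.mkQ_surjective _ n
    rw [← map_smul]
    exact (Submodule.Quotient.mk_eq_zero _).2 ⟨n, rfl⟩
  have key : ∀ x, con M (ml y N).rangeRestrict j (con M (LinearMap.range (ml y N)).subtype j x)
      = y • x := by
    intro x
    rw [con_comp, ml_fac, con_smul]
  refine C.ex ((con M (LinearMap.range (ml y N)).mkQ j).codRestrict (tor y (E R N M j)) ?_)
    (((con M (LinearMap.range (ml y N)).subtype j).comp (tor y (E R N M j)).subtype).codRestrict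
      (LinearMap.ker (con M (ml y N).rangeRestrict j)) ?_) ?_ hq hK
  · intro x
    rw [LinearMap.mem_ker, LinearMap.smul_apply, LinearMap.id_apply, ← key, h3.apply_apply_eq_zero,
      map_zero]
  · rintro ⟨x, hx⟩
    rw [LinearMap.mem_ker]
    exact (key x).trans hx
  · rintro ⟨x, hx⟩
    have := h3 x
    simpa [Subtype.ext_iff] using this

lemma tsub {a : Ideal R} (s : Submodule.torsionBySet R M (a : Set R)) (x : R) (hx : x ∈ a) : x • (s : M) = 0 :=
  (Submodule.mem_torsionBySet_iff _ _).1 s.2 ⟨x, hx⟩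

/-- `Hom(R/a, M) = 0 :_M a`. -/
lemma SC.hom_iff {C : SC R} (a : Ideal R) : C.mem (E R (R ⧸ a) M 0) ↔ C.mem (Submodule.torsionBySet R M (a : Set R)) := by
  let φ : ((R ⧸ a) →ₗ[R] M) →ₗ[R] M := LinearMap.applyₗ (Submodule.Quotient.mk (1 : R))
  have hφ : ∀ f, φ f ∈ Submodule.torsionBySet R M (a : Set R) := by
    intro f
    rw [Submodule.mem_torsionBySet_iff]
    rintro ⟨r, hr⟩
    change r • f (Submodule.Quotient.mk 1) = 0
    rw [← map_smul, ← Submodule.Quotient.mk_smul, (Submodule.Quotient.mk_eq_zero a).2, map_zero]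
    simpa using hr
  have hb : Function.Bijective (φ.codRestrict _ hφ) := by
    constructor
    · intro f g hfg
      apply Submodule.linearMap_qext
      ext
      exact congrArg Subtype.val hfg
    · intro s
      refine ⟨a.liftQ (LinearMap.toSpanSingleton R M s.1) ?_, ?_⟩
      · intro x hx
        exact tsub s x hx
      · ext
        change LinearMap.toSpanSingleton R M s.1 1 = _
        simp
  let e := (e0 R (R ⧸ a) M).trans (LinearEquiv.ofBijective _ hb)
  exact ⟨fun h => SC.equiv h e, fun h => SC.equiv h e.symm⟩

end
end Cof

namespace Cof

section
variable {R : Type u} [CommRing R]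
variable {W : Type u} [AddCommGroup W] [Module R W]

/-- auxiliary submodule in the lemma of Melkersson -/
def melk (x : R) (V : Submodule R W) (n : ℕ) : Submodule R (tor x W) where
  carrier := {u | ∃ v ∈ V, x ^ (n + 1) • v = 0 ∧ x ^ n • v = u.1}
  add_mem' := by
    rintro u u' ⟨v, hv, h1, h2⟩ ⟨v', hv', h1', h2'⟩
    exact ⟨v + v', V.add_mem hv hv', by rw [smul_add, h1, h1', add_zero], by rw [smul_add, h2, h2']; rfl⟩
  zero_mem' := ⟨0, V.zero_mem, by simp, by simp⟩
  smul_mem' := by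
    rintro r u ⟨v, hv, h1, h2⟩
    exact ⟨r • v, V.smul_mem r hv, by rw [smul_comm, h1, smul_zero], by rw [smul_comm, h2]; rfl⟩

lemma mem_melk (x : R) (V : Submodule R W) (n : ℕ) (u : tor x W) :
    u ∈ melk x V n ↔ ∃ v ∈ V, x ^ (n + 1) • v = 0 ∧ x ^ n • v = u.1 := Iff.rfl

lemma melk_mono {x : R} {V V' : Submodule R W} (h : V ≤ V') (n : ℕ) : melk x V n ≤ melk x V' n := by
  rintro u ⟨v, hv, h1⟩
  exact ⟨v, h hv, h1⟩

lemma melk_anti (x : R) (V : Submodule R W) : Antitone (melk x V) := by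
  apply antitone_nat_of_succ_le
  rintro n u ⟨v, hv, h1, h2⟩
  refine ⟨x • v, V.smul_mem _ hv, ?_, ?_⟩
  · rw [smul_smul, ← pow_succ, h1]
  · rw [smul_smul, ← pow_succ, h2]

lemma melk_le {x : R} (hx : ∀ w : W, ∃ n : ℕ, x ^ n • w = 0) {V V' : Submodule R W} (hV : V ≤ V')
    (h : ∀ n, melk x V' n ≤ melk x V n) : V' ≤ V := by
  have key : ∀ n : ℕ, ∀ w ∈ V', x ^ n • w = 0 → w ∈ V := by
    intro n
    induction n with
    | zero => intro w _ h0; simp at h0; simp [h0]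
    | succ n ih =>
      intro w hw h0
      have : (⟨x ^ n • w, by
        rw [LinearMap.mem_ker, LinearMap.smul_apply, LinearMap.id_apply, smul_smul, ← pow_succ', h0]⟩ : tor x W) ∈ melk x V n :=
        h n ⟨w, hw, h0, rfl⟩
      obtain ⟨v, hv, h1, h2⟩ := this
      have h3 := ih (w - v) (V'.sub_mem hw (hV hv)) (by rw [smul_sub, h2, sub_self])
      have := V.add_mem h3 hv
      simpa using this
  intro w hw
  obtain ⟨n, hn⟩ := hx w
  exact key n w hw hn

lemma melkersson (x : R) (hx : ∀ w : W, ∃ n : ℕ, x ^ n • w = 0) [IsArtinian R (tor x W)] :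
    IsArtinian R W := by
  rw [← monotone_stabilizes_iff_artinian]
  intro f
  have stab : ∀ g : ℕ →o (Submodule R (tor x W))ᵒᵈ, ∃ n, ∀ m, n ≤ m → g n = g m :=
    monotone_stabilizes_iff_artinian.2 inferInstance
  have hf : ∀ i j, i ≤ j → @LE.le (Submodule R W) _ (OrderDual.ofDual (f j)) (OrderDual.ofDual (f i)) := fun i j h => f.monotone h
  obtain ⟨N, hN⟩ := stab ⟨fun i => OrderDual.toDual (melk x (OrderDual.ofDual (f i)) i), fun i j h =>
    (melk_mono (hf i j h) j).trans (melk_anti x _ h)⟩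
  have hk : ∀ n, ∃ k, ∀ m, k ≤ m → melk x (OrderDual.ofDual (f k)) n = melk x (OrderDual.ofDual (f m)) n := fun n =>
    stab ⟨fun i => OrderDual.toDual (melk x (OrderDual.ofDual (f i)) n), fun i j h => melk_mono (hf i j h) n⟩
  choose k hk using hk
  let K := max N ((Finset.range N).sup k)
  refine ⟨K, fun m hm => ?_⟩
  apply le_antisymm ?_ (hf _ _ hm)
  refine melk_le hx (hf _ _ hm) fun n => ?_
  by_cases hn : n < N
  · have h1 : k n ≤ K := le_trans (Finset.le_sup (f := k) (Finset.mem_range.2 hn)) (le_max_right _ _)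
    exact ((hk n K h1).symm.trans (hk n m (h1.trans hm))).le
  · push Not at hn
    calc melk x (OrderDual.ofDual (f K)) n ≤ melk x (OrderDual.ofDual (f N)) N :=
          (melk_mono (hf _ _ (le_max_left _ _)) n).trans (melk_anti x _ hn)
      _ = melk x (OrderDual.ofDual (f (max m n))) (max m n) :=
          hN _ (hn.trans (le_max_right _ _))
      _ ≤ melk x (OrderDual.ofDual (f m)) n := (melk_mono (hf _ _ (le_max_left _ _)) _).trans (melk_anti x _ (le_max_right _ _))

lemma melkersson' (s : Finset R) (W : Type u) [AddCommGroup W] [Module R W]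
    (hs : ∀ x ∈ s, ∀ w : W, ∃ n : ℕ, x ^ n • w = 0)
    (h : IsArtinian R (Submodule.torsionBySet R W (s : Set R))) : IsArtinian R W := by
  classical
  induction s using Finset.induction_on generalizing W with
  | empty =>
    have : Submodule.torsionBySet R W ((∅ : Finset R) : Set R) = ⊤ := by
      ext w; simp [Submodule.mem_torsionBySet_iff]
    rw [this] at h
    exact isArtinian_of_linearEquiv (Submodule.topEquiv (R := R) (M := W))
  | insert x s hx ih =>
    have : IsArtinian R (tor x W) := by
      refine ih _ ?_ ?_
      · rintro y hy ⟨w, hw⟩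
        obtain ⟨n, hn⟩ := hs y (Finset.mem_insert_of_mem hy) w
        exact ⟨n, Subtype.ext hn⟩
      · refine isArtinian_of_injective (((tor x W).subtype.comp
          (Submodule.torsionBySet R (tor x W) (s : Set R)).subtype).codRestrict
            (Submodule.torsionBySet R W ((insert x s : Finset R) : Set R)) ?_) ?_
        · rintro ⟨⟨w, hw⟩, hw2⟩
          rw [Submodule.mem_torsionBySet_iff] at hw2 ⊢
          rintro ⟨y, hy⟩
          rcases Finset.mem_insert.1 hy with rfl | hy
          · exact hw
          · exact congrArg Subtype.val (hw2 ⟨y, hy⟩)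
        · intro u v huv
          have h3 := congrArg (fun t => t.1) huv
          exact Subtype.ext (Subtype.ext h3)
    exact melkersson x (hs x (Finset.mem_insert_self _ _))

lemma melkersson_ideal (a : Ideal R) (ha : a.FG) (W : Type u) [AddCommGroup W] [Module R W]
    (hW : ATor a W) (h : IsArtinian R (Submodule.torsionBySet R W (a : Set R))) :
    IsArtinian R W := by
  obtain ⟨s, rfl⟩ := ha
  refine melkersson' s W ?_ ?_
  · intro x hx w
    obtain ⟨n, hn⟩ := hW w
    exact ⟨n, hn _ (Ideal.pow_mem_pow (Ideal.subset_span hx) n)⟩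
  · rw [Submodule.torsionBySet_eq_torsionBySet_span]
    exact h

lemma smul_eq_zero_of_pow {J : Ideal R} (t : Finset (Submodule R W))
    (ht : ∀ H ∈ t, ∃ k, J ^ k ≤ H.annihilator) : ∃ K, J ^ K • t.sup id = ⊥ := by
  classical
  induction t using Finset.induction_on with
  | empty => exact ⟨0, by simp⟩
  | insert H t hH ih =>
    obtain ⟨K, hK⟩ := ih fun H' h => ht H' (Finset.mem_insert_of_mem h)
    obtain ⟨k, hk⟩ := ht H (Finset.mem_insert_self _ _)
    refine ⟨K + k, ?_⟩
    rw [Finset.sup_insert, Submodule.smul_sup, eq_bot_iff]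
    apply sup_le
    · refine (Submodule.smul_mono_left (Ideal.pow_le_pow_right (Nat.le_add_left k K))).trans ?_
      rw [Submodule.smul_le]
      intro r hr n hn
      have := Submodule.mem_annihilator.1 (hk hr) n hn
      simp [this]
    · rw [← hK]
      exact Submodule.smul_mono_left (Ideal.pow_le_pow_right (Nat.le_add_right K k))

lemma fitting [IsArtinian R W] {H : Submodule R W} (hH : SupIrred H) (s : R) :
    (∃ n, s ^ n ∈ H.annihilator) ∨ (∀ h ∈ H, ∃ h' ∈ H, s • h' = h) := by
  have h1 := LinearMap.eventually_codisjoint_ker_pow_range_pow (ml s H)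
  obtain ⟨n, hn⟩ := (h1.and (Filter.eventually_ge_atTop 1)).exists
  obtain ⟨hn, hn1⟩ := hn
  have hpow : ∀ h : H, (ml s H ^ n) h = s ^ n • h := by
    intro h
    rw [smul_pow]
    simp
  have h2 : (LinearMap.ker (ml s H ^ n)).map H.subtype ⊔ (LinearMap.range (ml s H ^ n)).map H.subtype = H := by
    rw [← Submodule.map_sup, hn.eq_top, Submodule.map_top, Submodule.range_subtype]
  rcases hH.2 h2 with h3 | h3
  · left
    refine ⟨n, Submodule.mem_annihilator.2 fun h hh => ?_⟩
    rw [← h3] at hh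
    obtain ⟨k, hk, rfl⟩ := hh
    have : (ml s H ^ n) k = 0 := hk
    rw [hpow] at this
    exact congrArg Subtype.val this
  · right
    intro h hh
    rw [← h3] at hh
    obtain ⟨_, ⟨k, rfl⟩, rfl⟩ := hh
    obtain ⟨m, rfl⟩ : ∃ m, n = m + 1 := ⟨n - 1, by omega⟩
    refine ⟨s ^ m • k.1, H.smul_mem _ k.2, ?_⟩
    rw [hpow, smul_smul, ← pow_succ']
    rfl

lemma attached [IsArtinian R W] (J : Ideal R) (hJ : J.FG) :
    ∃ n : ℕ, ∃ P : Set (Ideal R), P.Finite ∧ (∀ q ∈ P, q.IsPrime ∧ ¬ J ≤ q) ∧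
      ∀ x : R, (∀ q ∈ P, x ∉ q) → ∀ d ∈ J ^ n • (⊤ : Submodule R W),
        ∃ d' ∈ J ^ n • (⊤ : Submodule R W), x • d' = d := by
  classical
  obtain ⟨n, hn⟩ := (monotone_stabilizes_iff_artinian (R := R) (M := W)).2 inferInstance
    ⟨fun i => OrderDual.toDual (J ^ i • (⊤ : Submodule R W)), fun i j h =>
      Submodule.smul_mono_left (Ideal.pow_le_pow_right h)⟩
  replace hn : ∀ m, n ≤ m → J ^ n • (⊤ : Submodule R W) = J ^ m • (⊤ : Submodule R W) := hn
  set D := J ^ n • (⊤ : Submodule R W) with hD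
  have hDk : ∀ k, J ^ k • D = D := by
    intro k
    rw [hD, ← Submodule.mul_smul, ← pow_add, ← hn _ (Nat.le_add_left n k)]
  obtain ⟨t, ht, hirr⟩ := exists_supIrred_decomposition D
  let good := t.filter fun H => ¬ J ≤ H.annihilator.radical
  let bad := t.filter fun H => J ≤ H.annihilator.radical
  have hgb : good.sup id ⊔ bad.sup id = D := by
    rw [← Finset.sup_union, ← ht]
    congr 1
    ext H
    simp only [good, bad, Finset.mem_union, Finset.mem_filter]
    tauto
  obtain ⟨K, hK⟩ := smul_eq_zero_of_pow (J := J) bad (by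
    intro H hH
    exact Ideal.exists_pow_le_of_le_radical_of_fg (Finset.mem_filter.1 hH).2 hJ)
  have hDg : D = good.sup id := by
    apply le_antisymm
    · rw [← hDk K, ← hgb, Submodule.smul_sup, hK, sup_bot_eq]
      exact Submodule.smul_le_right
    · rw [← hgb]; exact le_sup_left
  refine ⟨n, (fun H : Submodule R W => H.annihilator.radical) '' (good : Set (Submodule R W)),
    good.finite_toSet.image _, ?_, ?_⟩
  · rintro _ ⟨H, hH, rfl⟩
    have hH' := Finset.mem_filter.1 hH
    refine ⟨⟨?_, ?_⟩, hH'.2⟩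
    · intro htop
      exact hH'.2 (by have h' : H.annihilator.radical = ⊤ := htop
                      rw [h']; exact le_top)
    · intro s r hsr
      by_contra hcon
      push Not at hcon
      obtain ⟨h1, h2⟩ := hcon
      obtain ⟨k, hk⟩ := hsr
      have hs := (fitting (hirr hH'.1) s).resolve_left fun ⟨m, hm⟩ => h1 ⟨m, hm⟩
      apply h2
      refine ⟨k, Submodule.mem_annihilator.2 fun h hh => ?_⟩
      have hsk : ∀ j : ℕ, ∀ h ∈ H, ∃ h' ∈ H, s ^ j • h' = h := by
        intro j
        induction j with
        | zero => intro h hh; exact ⟨h, hh, by simp⟩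
        | succ j ih =>
          intro h hh
          obtain ⟨h', hh', rfl⟩ := ih h hh
          obtain ⟨h'', hh'', rfl⟩ := hs h' hh'
          exact ⟨h'', hh'', by rw [pow_succ, mul_smul]⟩
      obtain ⟨h', hh', rfl⟩ := hsk k h hh
      have := Submodule.mem_annihilator.1 hk h' hh'
      rwa [mul_pow, mul_comm, mul_smul] at this
  · intro x hx
    have : D ≤ D.map (ml x W) := by
      conv_lhs => rw [hDg]
      apply Finset.sup_le
      intro H hH h hh
      have hH' := Finset.mem_filter.1 hH
      have hs := (fitting (hirr hH'.1) x).resolve_left fun ⟨m, hm⟩ => hx _ ⟨H, hH, rfl⟩ ⟨m, hm⟩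
      obtain ⟨h', hh', rfl⟩ := hs h hh
      refine ⟨h', ?_, rfl⟩
      have : H ≤ D := hDg ▸ Finset.le_sup (f := id) hH
      exact this hh'
    intro d hd
    obtain ⟨d', hd', rfl⟩ := this hd
    exact ⟨d', hd', rfl⟩

lemma avoid (J : Ideal R) (P : Set (Ideal R)) (hP : P.Finite) (h : ∀ q ∈ P, q.IsPrime ∧ ¬ J ≤ q) :
    ∃ x ∈ J, ∀ q ∈ P, x ∉ q := by
  classical
  by_contra hcon
  push Not at hcon
  have h1 : (J : Set R) ⊆ ⋃ q ∈ (hP.toFinset : Set (Ideal R)), ((q : Ideal R) : Set R) := by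
    intro x hx
    obtain ⟨q, hq, hxq⟩ := hcon x hx
    simp only [Set.Finite.coe_toFinset, Set.mem_iUnion]
    exact ⟨q, hq, hxq⟩
  have := (Ideal.subset_union_prime (s := hP.toFinset) (f := id) ⊥ ⊥ (fun i hi _ _ =>
    (h i (hP.mem_toFinset.1 hi)).1) (I := J)).1 h1
  obtain ⟨q, hq, hle⟩ := this
  exact (h q (hP.mem_toFinset.1 hq)).2 hle

/-- module killed by a power of `a` with `Hom` in the class is in the class. -/
lemma SC.of_killed [IsNoetherianRing R] {C : SC R} {a : Ideal R} (n : ℕ)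
    (hk : ∀ r ∈ a ^ n, ∀ w : W, r • w = 0) (h : C.mem (E R (R ⧸ a) W 0)) : C.mem W := by
  have h1 : C.mem (E R (R ⧸ a ^ n) W 0) := by
    refine lemmaA (d := 0) (a := a) ?_ 0 le_rfl ?_
    · intro i hi
      obtain rfl : i = 0 := by omega
      exact h
    · intro m
      obtain ⟨x, rfl⟩ := Ideal.Quotient.mk_surjective m
      refine ⟨n, fun r hr => ?_⟩
      rw [← Ideal.Quotient.mk_eq_mk, ← Submodule.Quotient.mk_smul]
      exact (Submodule.Quotient.mk_eq_zero _).2 ((a ^ n).mul_mem_right _ hr)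
  rw [SC.hom_iff] at h1
  refine SC.surj h1 (Submodule.subtype _) ?_
  intro w
  refine ⟨⟨w, ?_⟩, rfl⟩
  rw [Submodule.mem_torsionBySet_iff]
  rintro ⟨r, hr⟩
  exact hk r hr w

lemma art [IsNoetherianRing R] (a : Ideal R) (I : Ideal R) : ∀ (W : Type u) [AddCommGroup W] [Module R W],
    IsArtinian R W → (∀ r ∈ I, ∀ w : W, r • w = 0) → Module.Finite R (E R (R ⧸ a) W 0) →
    ∀ j, Module.Finite R (E R (R ⧸ a) W j) := by
  induction I using WellFoundedGT.induction with
  | _ I ih =>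
    intro W _ _ hart hI h0
    obtain ⟨n, P, hP, hP2, hx⟩ := attached (W := W) a (IsNoetherian.noetherian a)
    obtain ⟨x, hxa, hxP⟩ := avoid a P hP hP2
    replace hx := hx x hxP
    set D := a ^ n • (⊤ : Submodule R W) with hD
    have hDj : ∀ j, (fgSC R).mem (E R (R ⧸ a) D j) := by
      by_cases hxI : x ∈ I
      · have : Subsingleton D := by
          refine ⟨?_⟩
          have : ∀ d : D, d = 0 := by
            rintro ⟨d, hd⟩
            obtain ⟨d', hd', rfl⟩ := hx d hd
            ext
            exact hI x hxI _
          intro d d'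
          rw [this d, this d']
        exact fun j => SC.ext ((fgSC R).zero) j
      · have hlt : I < I ⊔ Ideal.span {x} := by
          refine lt_of_le_of_ne le_sup_left fun h => hxI ?_
          rw [h]
          exact Ideal.mem_sup_right (Ideal.mem_span_singleton_self x)
        have hL := ih _ hlt (tor x D) inferInstance (by
          intro r hr w
          obtain ⟨r1, h1, r2, h2, rfl⟩ := Submodule.mem_sup.1 hr
          obtain ⟨c, rfl⟩ := Ideal.mem_span_singleton'.1 h2
          have hw : x • w = 0 := Subtype.ext (w.2)
          have hw1 : r1 • w = 0 := Subtype.ext (Subtype.ext (hI r1 h1 _))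
          rw [add_smul, hw1, mul_smul, hw, smul_zero, add_zero])
          (SC.lesCov₀ (C := fgSC R) (D.subtype ∘ₗ (tor x D).subtype)
            ((Submodule.injective_subtype _).comp (Submodule.injective_subtype _)) h0)
        intro j
        refine SC.Y1 x ?_ j (hL j) ?_
        · intro n
          obtain ⟨n, rfl⟩ := Ideal.Quotient.mk_surjective n
          rw [← Ideal.Quotient.mk_eq_mk, ← Submodule.Quotient.mk_smul]
          exact (Submodule.Quotient.mk_eq_zero _).2 (a.mul_mem_right _ hxa)
        · intro j hj
          have : Subsingleton (quo x D) := by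
            rw [Submodule.Quotient.subsingleton_iff, LinearMap.range_eq_top]
            rintro ⟨d, hd⟩
            obtain ⟨d', hd', h⟩ := hx d hd
            exact ⟨⟨d', hd'⟩, Subtype.ext h⟩
          exact SC.ext ((fgSC R).zero) j
    have hT : (fgSC R).mem (W ⧸ D) := by
      refine SC.of_killed (a := a) n ?_ ?_
      · intro r hr w
        obtain ⟨w, rfl⟩ := D.mkQ_surjective w
        rw [← map_smul]
        exact (Submodule.Quotient.mk_eq_zero _).2 (Submodule.smul_mem_smul hr trivial)
      · exact SC.lesCov₃ D.subtype D.mkQ (Submodule.injective_subtype _)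
          (LinearMap.exact_subtype_mkQ _) (Submodule.mkQ_surjective _) 0 h0 (hDj 1)
    intro j
    exact SC.lesCov₂ (C := fgSC R) D.subtype D.mkQ (Submodule.injective_subtype _)
          (LinearMap.exact_subtype_mkQ _) (Submodule.mkQ_surjective _) j (hDj j) (SC.ext hT j)

end
end Cof

namespace Cof

section
variable {R : Type u} [CommRing R]

/-- common denominators -/
lemma common_den {M : Type u} [AddCommGroup M] [Module R M] (S : Submonoid R) (K N : Submodule R M)
    (hK : K.FG) (h : ∀ k ∈ K, ∃ t ∈ S, t • k ∈ N) : ∃ t ∈ S, ∀ k ∈ K, t • k ∈ N := by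
  classical
  obtain ⟨s, rfl⟩ := hK
  have : ∀ s' : Finset M, s' ⊆ s → ∃ t ∈ S, ∀ k ∈ s', t • k ∈ N := by
    intro s'
    induction s' using Finset.induction_on with
    | empty => exact fun _ => ⟨1, S.one_mem, by simp⟩
    | insert k s' _ ih =>
      intro hs
      obtain ⟨t, ht, ht'⟩ := ih fun x hx => hs (Finset.mem_insert_of_mem hx)
      obtain ⟨t2, ht2, ht2'⟩ := h k (Submodule.subset_span (hs (Finset.mem_insert_self _ _)))
      refine ⟨t * t2, S.mul_mem ht ht2, fun x hx => ?_⟩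
      rcases Finset.mem_insert.1 hx with rfl | hx
      · rw [mul_smul]; exact N.smul_mem _ ht2'
      · rw [mul_comm, mul_smul]; exact N.smul_mem _ (ht' x hx)
  obtain ⟨t, ht, ht'⟩ := this s subset_rfl
  refine ⟨t, ht, ?_⟩
  have h2 : Submodule.span R (s : Set M) ≤ N.comap (ml t M) :=
    Submodule.span_le.2 fun x hx => ht' x hx
  exact fun k hk => h2 hk

lemma fg_smul_singleton {M : Type u} [AddCommGroup M] [Module R M] [IsNoetherianRing R] (a : Ideal R) (m : M) :
    (Submodule.map (LinearMap.toSpanSingleton R M m) a).FG :=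
  (IsNoetherian.noetherian a).map _

/-- common denominators, ideal version -/
lemma common_den' [IsNoetherianRing R] {M : Type u} [AddCommGroup M] [Module R M] (S : Submonoid R) (a : Ideal R) (m : M)
    (N : Submodule R M) (h : ∀ r ∈ a, ∃ t ∈ S, t • r • m ∈ N) : ∃ t ∈ S, ∀ r ∈ a, t • r • m ∈ N := by
  obtain ⟨t, ht, h2⟩ := common_den S _ N (fg_smul_singleton a m) (by
    rintro _ ⟨r, hr, rfl⟩
    exact h r hr)
  exact ⟨t, ht, fun r hr => h2 _ ⟨r, hr, rfl⟩⟩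

/-- Support in the maximal ideals. -/
def MSupp (R : Type u) [CommRing R] (X : Type u) [AddCommGroup X] [Module R X] : Prop :=
  ∀ q : Ideal R, q.IsPrime → ¬ q.IsMaximal → ∀ x : X, ∃ s, s ∉ q ∧ s • x = 0

lemma MSupp.inj {X Y : Type u} [AddCommGroup X] [Module R X] [AddCommGroup Y] [Module R Y]
    (h : MSupp R Y) (f : X →ₗ[R] Y) (hf : Function.Injective f) : MSupp R X := by
  intro q h1 h2 x
  obtain ⟨s, hs, h3⟩ := h q h1 h2 (f x)
  exact ⟨s, hs, hf (by rw [map_smul, h3, map_zero])⟩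

lemma MSupp.surj {X Y : Type u} [AddCommGroup X] [Module R X] [AddCommGroup Y] [Module R Y]
    (h : MSupp R X) (f : X →ₗ[R] Y) (hf : Function.Surjective f) : MSupp R Y := by
  intro q h1 h2 y
  obtain ⟨x, rfl⟩ := hf y
  obtain ⟨s, hs, h3⟩ := h q h1 h2 x
  exact ⟨s, hs, by rw [← map_smul, h3, map_zero]⟩

lemma MSupp.art [IsNoetherianRing R] {X : Type u} [AddCommGroup X] [Module R X]
    (h : MSupp R X) [hX : Module.Finite R X] : IsArtinian R X := by
  revert h
  induction hX using IsNoetherianRing.induction_on_isQuotientEquivQuotientPrime R with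
  | subsingleton N => intro _; infer_instance
  | quotient N p e =>
    intro h
    have hmax : p.1.IsMaximal := by
      by_contra hm
      obtain ⟨s, hs, h0⟩ := (h.surj e.toLinearMap e.surjective) p.1 p.2 hm (Submodule.Quotient.mk 1)
      rw [← Submodule.Quotient.mk_smul, Submodule.Quotient.mk_eq_zero] at h0
      exact hs (by simpa using h0)
    have : IsSimpleModule R (R ⧸ p.1) := isSimpleModule_iff_isCoatom.2 hmax.out
    exact isArtinian_of_linearEquiv e.symm
  | exact N₁ N₂ N₃ f g hf hg hfg h1 h3 =>
    intro h
    have := h1 (h.inj f hf)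
    have := h3 (h.surj g hg)
    exact isArtinian_of_range_eq_ker f g hfg.linearMap_ker_eq.symm

theorem thmT [IsNoetherianRing R] (C : SC R) (T : Set (Ideal R)) (a : Ideal R)
    (h1 : ∀ (G : Type u) [AddCommGroup G] [Module R G], ATor a G → C.mem (E R (R ⧸ a) G 0) →
      (∃ n : ℕ, ∀ p ∈ T, ∀ g : G, ∃ s, s ∉ p ∧ ∀ α ∈ a ^ n, s • α • g = 0) →
      ∀ j, C.mem (E R (R ⧸ a) G j))
    (h2 : ∀ (M : Type u) [AddCommGroup M] [Module R M], ATor a M → C.mem (E R (R ⧸ a) M 0) →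
      ∃ x ∈ a, ∃ n : ℕ, ∀ p ∈ T, ∀ m : M, ∃ s, s ∉ p ∧ ∀ α ∈ a ^ n,
        s • α • m ∈ LinearMap.range (ml x M))
    (I : Ideal R) : ∀ (M : Type u) [AddCommGroup M] [Module R M], ATor a M →
      (∀ r ∈ I, ∀ m : M, r • m = 0) → C.mem (E R (R ⧸ a) M 0) → C.mem (E R (R ⧸ a) M 1) →
      ∀ j, C.mem (E R (R ⧸ a) M j) := by
  induction I using WellFoundedGT.induction with
  | _ I ih =>
    intro M _ _ hM hI he0 he1
    obtain ⟨x, hxa, n, hx⟩ := h2 M hM he0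
    by_cases hxI : x ∈ I
    · refine h1 M hM he0 ⟨n, fun p hp m => ?_⟩
      obtain ⟨s, hs, hs2⟩ := hx p hp m
      refine ⟨s, hs, fun α hα => ?_⟩
      obtain ⟨m', hm'⟩ := hs2 α hα
      rw [← hm']
      exact hI x hxI m'
    · have hlt : I < I ⊔ Ideal.span {x} := by
        refine lt_of_le_of_ne le_sup_left fun h => hxI ?_
        rw [h]
        exact Ideal.mem_sup_right (Ideal.mem_span_singleton_self x)
      have hex : Function.Exact (tor x M).subtype (ml x M).rangeRestrict := by
        intro x; simp [Subtype.ext_iff]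
      have hxM0 : C.mem (E R (R ⧸ a) (LinearMap.range (ml x M)) 0) :=
        SC.lesCov₀ (Submodule.subtype _) (Submodule.injective_subtype _) he0
      have hL := ih _ hlt (tor x M) (hM.inj _ (Submodule.injective_subtype _)) (by
          intro r hr w
          obtain ⟨r1, h1, r2, h2, rfl⟩ := Submodule.mem_sup.1 hr
          obtain ⟨c, rfl⟩ := Ideal.mem_span_singleton'.1 h2
          have hw : x • w = 0 := Subtype.ext (w.2)
          have hw1 : r1 • w = 0 := Subtype.ext (hI r1 h1 _)
          rw [add_smul, hw1, mul_smul, hw, smul_zero, add_zero])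
          (SC.lesCov₀ (Submodule.subtype _) (Submodule.injective_subtype _) he0)
          (SC.lesCov₁ (tor x M).subtype (ml x M).rangeRestrict (Submodule.injective_subtype _)
            hex (LinearMap.surjective_rangeRestrict _) 0 hxM0 he1)
      have hxM1 : C.mem (E R (R ⧸ a) (LinearMap.range (ml x M)) 1) :=
        SC.lesCov₃ (tor x M).subtype (ml x M).rangeRestrict (Submodule.injective_subtype _)
            hex (LinearMap.surjective_rangeRestrict _) 1 he1 (hL 2)
      have hG := h1 (quo x M) (hM.surj _ (Submodule.mkQ_surjective _))
        (SC.lesCov₃ (Submodule.subtype _) (LinearMap.range (ml x M)).mkQ (Submodule.injective_subtype _)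
          (LinearMap.exact_subtype_mkQ _) (Submodule.mkQ_surjective _) 0 he0 hxM1)
        ⟨n, fun p hp g => by
          obtain ⟨m, rfl⟩ := Submodule.mkQ_surjective _ g
          obtain ⟨s, hs, hs2⟩ := hx p hp m
          refine ⟨s, hs, fun α hα => ?_⟩
          rw [← map_smul, ← map_smul]
          exact (Submodule.Quotient.mk_eq_zero _).2 (hs2 α hα)⟩
      intro j
      refine SC.Y1 x ?_ j (hL j) fun j _ => hG j
      intro n
      obtain ⟨n, rfl⟩ := Ideal.Quotient.mk_surjective n
      rw [← Ideal.Quotient.mk_eq_mk, ← Submodule.Quotient.mk_smul]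
      exact (Submodule.Quotient.mk_eq_zero _).2 (a.mul_mem_right _ hxa)

/-- The class of modules that become finite generically. -/
def genSC [IsNoetherianRing R] (S : Submonoid R) : SC R where
  mem X _ _ := ∃ f ∈ S, ∃ F : Submodule R X, F.FG ∧ ∀ x, ∃ n : ℕ, f ^ n • x ∈ F
  ex {X Y Z} _ _ _ _ _ _ φ ψ h := by
    rintro ⟨f, hf, F, hF, hF2⟩ ⟨g, hg, G, hG, hG2⟩
    have hfin : Module.Finite R G := Module.Finite.iff_fg.2 hG
    have hfg : (G ⊓ LinearMap.range ψ).FG := Submodule.FG.of_le hG inf_le_left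
    obtain ⟨F', hF', hF'2⟩ : ∃ F' : Submodule R Y, F'.FG ∧ F'.map ψ = G ⊓ LinearMap.range ψ := by
      obtain ⟨s, hs⟩ := hfg
      have hsub : (s : Set Z) ⊆ Set.range ψ := by
        intro z hz
        have : z ∈ G ⊓ LinearMap.range ψ := hs ▸ Submodule.subset_span hz
        exact this.2
      choose c hc using fun z : s => hsub z.2
      refine ⟨Submodule.span R (Set.range c), Submodule.fg_span (Set.finite_range c), ?_⟩
      rw [Submodule.map_span, ← hs, ← Set.range_comp]
      congr 1
      ext z
      constructor
      · rintro ⟨w, rfl⟩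
        simp [hc]
      · intro hz
        exact ⟨⟨z, hz⟩, hc _⟩
    refine ⟨f * g, S.mul_mem hf hg, F.map φ ⊔ F', (hF.map φ).sup hF', fun y => ?_⟩
    obtain ⟨n, hn⟩ := hG2 (ψ y)
    have : ψ (g ^ n • y) ∈ F'.map ψ := by
      rw [hF'2]
      exact ⟨by rw [map_smul]; exact hn, ⟨_, rfl⟩⟩
    obtain ⟨y', hy', hy2⟩ := this
    obtain ⟨x, hx⟩ := (h (g ^ n • y - y')).1 (by rw [map_sub, hy2, sub_self])
    obtain ⟨m, hm⟩ := hF2 x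
    refine ⟨n + m, ?_⟩
    have e : (f * g) ^ (n + m) • y = (f ^ n * g ^ m) • (φ (f ^ m • x) + f ^ m • y') := by
      rw [map_smul, hx, ← smul_add, sub_add_cancel, smul_smul, smul_smul]
      congr 1
      ring
    rw [e]
    exact Submodule.smul_mem _ _ (Submodule.add_mem_sup ⟨_, hm, rfl⟩ (F'.smul_mem _ hy'))
  fin X _ _ h := ⟨1, S.one_mem, ⊤, h.1, fun x => ⟨0, trivial⟩⟩

/-- complement of a union of primes. -/
def cpl (T : Set (Ideal R)) (hT : ∀ p ∈ T, p.IsPrime) : Submonoid R where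
  carrier := {f | ∀ p ∈ T, f ∉ p}
  one_mem' := fun p hp h => (hT p hp).ne_top ((Ideal.eq_top_iff_one p).2 h)
  mul_mem' := fun hx hy p hp h => ((hT p hp).mem_or_mem h).elim (hx p hp) (hy p hp)

lemma mem_cpl {T : Set (Ideal R)} {hT : ∀ p ∈ T, p.IsPrime} {f : R} : f ∈ cpl T hT ↔ ∀ p ∈ T, f ∉ p :=
  Iff.rfl

end
end Cof

namespace Cof

section loc
variable {R : Type u} [CommRing R] (S : Submonoid R)
variable {A : Type u} [CommRing A] [Algebra R A] [IsLocalization S A]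
variable {M M' : Type u} [AddCommGroup M] [Module R M] [AddCommGroup M'] [Module R M'] [Module A M']
  [IsScalarTower R A M'] (f : M →ₗ[R] M') [IsLocalizedModule S f]

include S in
/-- If `s • y` lies in an `A`-submodule, `s ∈ S`, then so does `y`. -/
lemma loc_mem (N : Submodule A M') (s : R) (hs : s ∈ S) (y : M') (h : s • y ∈ N) : y ∈ N := by
  have hu : IsUnit (algebraMap R A s) := IsLocalization.map_units A ⟨s, hs⟩
  obtain ⟨v, hv⟩ := hu.exists_left_inv
  have : v • (s • y) ∈ N := N.smul_mem _ h
  rwa [← algebraMap_smul A s y, smul_smul, hv, one_smul] at this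

include S f in
lemma loc_finite (F : Submodule R M) (hF : F.FG) (h : ∀ m, ∃ s ∈ S, s • m ∈ F) :
    Module.Finite A M' := by
  obtain ⟨t, rfl⟩ := hF
  refine ⟨⟨_, (Submodule.fg_span (R := A) ((t.finite_toSet.image f))).choose_spec.trans ?_⟩⟩
  rw [eq_top_iff]
  intro y _
  obtain ⟨⟨m, s⟩, hms⟩ := IsLocalizedModule.surj S f y
  obtain ⟨s', hs', hm⟩ := h m
  apply loc_mem S _ s.1 s.2
  apply loc_mem S _ s' hs'
  have h1 : f (s' • m) ∈ Submodule.span A (f '' (t : Set M)) := by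
    have : (Submodule.span R (t : Set M)).map f ≤ (Submodule.span A (f '' (t : Set M))).restrictScalars R := by
      rw [Submodule.map_span]
      exact Submodule.span_le.2 Submodule.subset_span
    exact this ⟨_, hm, rfl⟩
  rw [map_smul, ← hms] at h1
  exact h1

include S f in
lemma loc_torsion_finite [IsNoetherianRing R] (a : Ideal R)
    (h : ∃ F : Submodule R M, F.FG ∧ ∀ m ∈ Submodule.torsionBySet R M (a : Set R), ∃ s ∈ S, s • m ∈ F) :
    Module.Finite A (Submodule.torsionBySet A M' (a.map (algebraMap R A) : Set A)) := by
  have : IsNoetherianRing A := IsLocalization.isNoetherianRing S A inferInstance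
  obtain ⟨F, ⟨t, rfl⟩, h⟩ := h
  have hfin : Module.Finite A (Submodule.span A (f '' (t : Set M))) :=
    Module.Finite.iff_fg.2 (Submodule.fg_span (t.finite_toSet.image f))
  suffices hle : Submodule.torsionBySet A M' (a.map (algebraMap R A) : Set A) ≤ Submodule.span A (f '' (t : Set M)) from
    Module.Finite.iff_fg.2 (Submodule.FG.of_le (Module.Finite.iff_fg.1 hfin) hle)
  intro u hu
  obtain ⟨⟨m, s⟩, hms⟩ := IsLocalizedModule.surj S f u
  have hz : ∀ r ∈ a, ∃ t ∈ S, t • r • m ∈ (⊥ : Submodule R M) := by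
    intro r hr
    have h1 : f (r • m) = 0 := by
      rw [map_smul, ← hms]
      change r • s.1 • u = 0
      rw [smul_comm]
      have := (Submodule.mem_torsionBySet_iff _ _).1 hu ⟨_, Ideal.mem_map_of_mem (algebraMap R A) hr⟩
      change algebraMap R A r • u = 0 at this
      rw [algebraMap_smul] at this
      rw [this, smul_zero]
    obtain ⟨c, hc⟩ := (IsLocalizedModule.eq_zero_iff S f).1 h1
    exact ⟨c.1, c.2, hc⟩
  obtain ⟨c, hc, hcm⟩ := common_den' S a m ⊥ hz
  obtain ⟨s', hs', hm⟩ := h (c • m) (by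
    rw [Submodule.mem_torsionBySet_iff]
    rintro ⟨r, hr⟩
    change r • c • m = 0
    rw [smul_comm]
    exact hcm r hr)
  apply loc_mem S _ s.1 s.2
  apply loc_mem S _ c hc
  apply loc_mem S _ s' hs'
  have h1 : f (s' • c • m) ∈ Submodule.span A (f '' (t : Set M)) := by
    have : (Submodule.span R (t : Set M)).map f ≤ (Submodule.span A (f '' (t : Set M))).restrictScalars R := by
      rw [Submodule.map_span]
      exact Submodule.span_le.2 Submodule.subset_span
    exact this ⟨_, hm, rfl⟩
  rw [map_smul, map_smul, ← hms] at h1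
  exact h1

include S f in
lemma loc_ATor [IsNoetherianRing R] {a : Ideal R} (h : ATor a M) : ATor (a.map (algebraMap R A)) M' := by
  intro u
  obtain ⟨⟨m, s⟩, hms⟩ := IsLocalizedModule.surj S f u
  obtain ⟨n, hn⟩ := h m
  refine ⟨n, ?_⟩
  rw [← Ideal.map_pow]
  have : (a ^ n).map (algebraMap R A) ≤ LinearMap.ker (LinearMap.toSpanSingleton A M' u) := by
    rw [Ideal.map_le_iff_le_comap]
    intro r hr
    change algebraMap R A r • u = 0
    rw [algebraMap_smul, ← Submodule.mem_bot (R := A)]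
    apply loc_mem S _ s.1 s.2
    have : s.1 • u = f m := hms
    rw [smul_comm, this, ← map_smul, hn r hr, map_zero]
    exact Submodule.zero_mem _
  exact fun r hr => this hr

end loc

section
variable {R : Type u} [CommRing R] [IsNoetherianRing R]

lemma h2_aux (p : Ideal R) [hp : p.IsPrime] (a : Ideal R) (hpa : p ∈ a.minimalPrimes)
    (M : Type u) [AddCommGroup M] [Module R M] (hM : ATor a M)
    (h : ∃ F : Submodule R M, F.FG ∧ ∀ m ∈ Submodule.torsionBySet R M (a : Set R), ∃ s, s ∉ p ∧ s • m ∈ F) :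
    ∃ n : ℕ, ∃ P : Set (Ideal R), P.Finite ∧ (∀ q ∈ P, q.IsPrime ∧ ¬ a ≤ q) ∧
      ∀ x : R, (∀ q ∈ P, x ∉ q) → ∀ m : M, ∃ s, s ∉ p ∧ ∀ α ∈ a ^ n,
        s • α • m ∈ LinearMap.range (ml x M) := by
  let A := Localization.AtPrime p
  let f := LocalizedModule.mkLinearMap p.primeCompl M
  have : IsNoetherianRing A := IsLocalization.isNoetherianRing p.primeCompl A inferInstance
  set J := a.map (algebraMap R A) with hJ
  have hfin : Module.Finite A (Submodule.torsionBySet A (LocalizedModule p.primeCompl M) (J : Set A)) :=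
    loc_torsion_finite p.primeCompl f a h
  have hms : MSupp A (Submodule.torsionBySet A (LocalizedModule p.primeCompl M) (J : Set A)) := by
    intro q hq hqm x
    have hnot : ¬ J ≤ q := by
      intro hle
      apply hqm
      have h1 : a ≤ q.comap (algebraMap R A) := Ideal.map_le_iff_le_comap.1 hle
      have h2 : q.comap (algebraMap R A) ≤ p := by
        have h3 := IsLocalRing.le_maximalIdeal hq.ne_top
        have h4 := Ideal.comap_mono (f := algebraMap R A) h3
        have h5 : Ideal.comap (algebraMap R A) (IsLocalRing.maximalIdeal A) = p :=
          Localization.AtPrime.under_maximalIdeal ..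
        exact h4.trans h5.le
      have h3 : p ≤ q.comap (algebraMap R A) := hpa.2 ⟨inferInstance, h1⟩ h2
      have h4 : IsLocalRing.maximalIdeal A ≤ q := by
        rw [← Localization.AtPrime.map_eq_maximalIdeal, Ideal.map_le_iff_le_comap]
        exact h3
      rw [← (IsLocalRing.maximalIdeal.isMaximal A).eq_of_le hq.ne_top h4]
      infer_instance
    obtain ⟨s, hs, hsq⟩ := SetLike.not_le_iff_exists.1 hnot
    exact ⟨s, hsq, Subtype.ext (tsub x s hs)⟩
  have : IsArtinian A (Submodule.torsionBySet A (LocalizedModule p.primeCompl M) (J : Set A)) := hms.art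
  have hMT : ATor J (LocalizedModule p.primeCompl M) := loc_ATor p.primeCompl f hM
  have hart : IsArtinian A (LocalizedModule p.primeCompl M) :=
    melkersson_ideal J (IsNoetherian.noetherian J) _ hMT this
  obtain ⟨n, P, hP, hP1, hP2⟩ := attached (W := LocalizedModule p.primeCompl M) J (IsNoetherian.noetherian J)
  refine ⟨n, (Ideal.comap (algebraMap R A)) '' P, hP.image _, ?_, ?_⟩
  · rintro _ ⟨q, hq, rfl⟩
    have := (hP1 q hq).1
    exact ⟨inferInstance, fun h => (hP1 q hq).2 (Ideal.map_le_iff_le_comap.2 h)⟩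
  · intro x hx m
    refine common_den' p.primeCompl (a ^ n) m _ fun α hα => ?_
    obtain ⟨d', _, hd'⟩ := hP2 (algebraMap R A x) (fun q hq hxq => hx _ ⟨q, hq, rfl⟩ hxq) (f (α • m)) (by
      rw [map_smul, ← algebraMap_smul A α]
      refine Submodule.smul_mem_smul ?_ trivial
      rw [hJ, ← Ideal.map_pow]
      exact Ideal.mem_map_of_mem _ hα)
    obtain ⟨⟨m', s⟩, hms⟩ := IsLocalizedModule.surj p.primeCompl f d'
    have hms' : s.1 • d' = f m' := hms
    rw [algebraMap_smul] at hd'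
    have h0 : f (s.1 • α • m - x • m') = 0 := by
      rw [map_sub, map_smul, ← hd', map_smul f x, ← hms', smul_comm, sub_self]
    obtain ⟨c, hc⟩ := (IsLocalizedModule.eq_zero_iff p.primeCompl f).1 h0
    refine ⟨c.1 * s.1, p.primeCompl.mul_mem c.2 s.2, ?_⟩
    have hc' : c.1 • (s.1 • α • m - x • m') = 0 := hc
    rw [smul_sub, sub_eq_zero, smul_smul] at hc'
    rw [hc', smul_comm]
    exact ⟨c.1 • m', rfl⟩

lemma h2_main (T : Set (Ideal R)) (hTf : T.Finite) (hT : ∀ p ∈ T, p.IsPrime) (a : Ideal R) (hTa : ∀ p ∈ T, p ∈ a.minimalPrimes)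
    (M : Type u) [AddCommGroup M] [Module R M] (hM : ATor a M)
    (h : (genSC (cpl T hT)).mem (E R (R ⧸ a) M 0)) :
    ∃ x ∈ a, ∃ n : ℕ, ∀ p ∈ T, ∀ m : M, ∃ s, s ∉ p ∧ ∀ α ∈ a ^ n,
        s • α • m ∈ LinearMap.range (ml x M) := by
  rw [SC.hom_iff] at h
  obtain ⟨f, hf, F, hF, hF2⟩ := h
  have key : ∀ p : T, ∃ n : ℕ, ∃ P : Set (Ideal R), P.Finite ∧ (∀ q ∈ P, q.IsPrime ∧ ¬ a ≤ q) ∧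
      ∀ x : R, (∀ q ∈ P, x ∉ q) → ∀ m : M, ∃ s, s ∉ p.1 ∧ ∀ α ∈ a ^ n,
        s • α • m ∈ LinearMap.range (ml x M) := by
    intro p
    have hp := hT p.1 p.2
    refine h2_aux p.1 a (hTa p.1 p.2) M hM ⟨F.map (Submodule.subtype _), hF.map _, fun m hm => ?_⟩
    obtain ⟨n, hn⟩ := hF2 ⟨m, hm⟩
    refine ⟨f ^ n, fun h => hf p.1 p.2 (hp.mem_of_pow_mem n h), ⟨_, hn, rfl⟩⟩
  choose n P hP hP1 hP2 using key
  have := hTf.fintype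
  obtain ⟨x, hxa, hx⟩ := avoid a (⋃ p : T, P p) (Set.finite_iUnion hP) (by
    intro q hq
    obtain ⟨p, hp⟩ := Set.mem_iUnion.1 hq
    exact hP1 p q hp)
  refine ⟨x, hxa, Finset.univ.sup n, fun p hp m => ?_⟩
  obtain ⟨s, hs, hs2⟩ := hP2 ⟨p, hp⟩ x (fun q hq => hx q (Set.mem_iUnion.2 ⟨_, hq⟩)) m
  exact ⟨s, hs, fun α hα => hs2 α (Ideal.pow_le_pow_right (Finset.le_sup (f := n) (Finset.mem_univ _)) hα)⟩

/-- generic theorem -/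
theorem generic (T : Set (Ideal R)) (hTf : T.Finite) (hT : ∀ p ∈ T, p.IsPrime) (a : Ideal R)
    (hTa : ∀ p ∈ T, p ∈ a.minimalPrimes) (M : Type u) [AddCommGroup M] [Module R M] (hM : ATor a M)
    (h0 : (genSC (cpl T hT)).mem (E R (R ⧸ a) M 0)) (h1 : (genSC (cpl T hT)).mem (E R (R ⧸ a) M 1))
    (j : ℕ) : (genSC (cpl T hT)).mem (E R (R ⧸ a) M j) := by
  refine thmT (genSC (cpl T hT)) T a ?_ (fun M _ _ hM h => h2_main T hTf hT a hTa M hM h) ⊥ M hM ?_ h0 h1 j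
  · intro G _ _ hG hG0 ⟨n, hn⟩ j
    refine SC.ext ?_ j
    -- the submodule `0 :_G a^n`
    let K := Submodule.torsionBySet R G ((a ^ n : Ideal R) : Set R)
    have hK : (genSC (cpl T hT)).mem K := by
      refine SC.of_killed (a := a) n ?_ (SC.lesCov₀ K.subtype (Submodule.injective_subtype _) hG0)
      intro r hr w
      exact Subtype.ext (tsub w r hr)
    refine (genSC (cpl T hT)).ex K.subtype K.mkQ (LinearMap.exact_subtype_mkQ _) hK ?_
    have hG0' := SC.hom_iff a |>.1 hG0
    let U0 : Submodule R G := a ^ n • Submodule.torsionBySet R G ((a ^ (n + 1) : Ideal R) : Set R)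
    have hU0 : U0 ≤ Submodule.torsionBySet R G (a : Set R) := by
      refine Submodule.smul_le.2 fun r hr g hg => ?_
      rw [Submodule.mem_torsionBySet_iff]
      rintro ⟨s, hs⟩
      change s • r • g = 0
      rw [smul_smul]
      exact tsub ⟨g, hg⟩ _ (by rw [pow_succ']; exact Ideal.mul_mem_mul hs hr)
    have hU : (genSC (cpl T hT)).mem U0 := SC.inj hG0' (Submodule.inclusion hU0) (Submodule.inclusion_injective _)
    obtain ⟨f, hf, F, hF, hF2⟩ := hU
    have hloc : ∀ p ∈ T, ∀ u ∈ U0, ∃ s, s ∉ p ∧ s • u = 0 := by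
      intro p hp u hu
      have hpp := hT p hp
      induction hu using Submodule.smul_induction_on' with
      | smul r hr g hg =>
        obtain ⟨s, hs, hs2⟩ := hn p hp g
        exact ⟨s, hs, hs2 r hr⟩
      | add x _ y _ hx hy =>
        obtain ⟨s, hs, hs2⟩ := hx
        obtain ⟨t, ht, ht2⟩ := hy
        refine ⟨s * t, fun h => (hpp.mem_or_mem h).elim hs ht, ?_⟩
        rw [smul_add, mul_comm, mul_smul, hs2, smul_zero, zero_add, mul_comm, mul_smul, ht2, smul_zero]
    obtain ⟨g, hg, hgT⟩ := avoid F.annihilator T hTf (by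
      intro p hp
      have hpp := hT p hp
      refine ⟨hpp, fun hle => ?_⟩
      obtain ⟨t, ht, ht2⟩ := common_den p.primeCompl F ⊥ hF (by
        rintro ⟨k, hk⟩ _
        obtain ⟨s, hs, h⟩ := hloc p hp k hk
        exact ⟨s, hs, Subtype.ext h⟩)
      exact ht (hle (Submodule.mem_annihilator.2 fun k hk => ht2 k hk)))
    refine ⟨f * g, (cpl T hT).mul_mem hf hgT, ⊥, Submodule.fg_bot, ?_⟩
    have hU2 : ∀ u ∈ U0, ∃ k : ℕ, (f * g) ^ k • u = 0 := by
      intro u hu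
      obtain ⟨k, hk⟩ := hF2 ⟨u, hu⟩
      refine ⟨k + 1, ?_⟩
      have h3 := congrArg Subtype.val (Submodule.mem_annihilator.1 hg _ hk)
      change g • f ^ k • u = 0 at h3
      rw [show (f * g) ^ (k + 1) = (f * g ^ k) * (g * f ^ k) by ring, mul_smul, mul_smul g, h3, smul_zero]
    have main : ∀ N : ℕ, ∀ z : G, (∀ r ∈ a ^ N, r • z = 0) → ∃ k : ℕ, (f * g) ^ k • z ∈ K := by
      intro N
      induction N with
      | zero =>
        intro z hz
        have : z = 0 := by simpa using hz 1 (by simp)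
        exact ⟨0, by simp [this]⟩
      | succ N ih =>
        intro z hz
        by_cases hN : N < n
        · refine ⟨0, ?_⟩
          rw [pow_zero, one_smul, Submodule.mem_torsionBySet_iff]
          rintro ⟨r, hr⟩
          exact hz r (Ideal.pow_le_pow_right (by omega) hr)
        · push Not at hN
          have hin : ∀ r ∈ a ^ N, r • z ∈ U0 := by
            intro r hr
            rw [show N = n + (N - n) by omega, pow_add] at hr
            induction hr using Submodule.mul_induction_on' with
            | mem_mul_mem r hr s hs =>
              rw [mul_smul]
              refine Submodule.smul_mem_smul hr ?_
              rw [Submodule.mem_torsionBySet_iff]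
              rintro ⟨t, ht⟩
              change t • s • z = 0
              rw [smul_smul]
              apply hz
              rw [show N + 1 = (n + 1) + (N - n) by omega, pow_add]
              exact Ideal.mul_mem_mul ht hs
            | add x _ y _ hx hy => rw [add_smul]; exact U0.add_mem hx hy
          obtain ⟨t, ⟨k, rfl⟩, ht2⟩ := common_den' (Submonoid.powers (f * g)) (a ^ N) z ⊥ (by
            intro r hr
            obtain ⟨k, hk⟩ := hU2 _ (hin r hr)
            exact ⟨_, ⟨k, rfl⟩, hk⟩)
          obtain ⟨k', hk'⟩ := ih ((f * g) ^ k • z) (by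
            intro r hr
            rw [smul_comm]
            exact ht2 r hr)
          exact ⟨k' + k, by rw [pow_add, mul_smul]; exact hk'⟩
    intro z
    obtain ⟨z, rfl⟩ := K.mkQ_surjective z
    obtain ⟨N, hN⟩ := hG z
    obtain ⟨k, hk⟩ := main N z hN
    refine ⟨k, ?_⟩
    rw [← map_smul]
    exact (Submodule.Quotient.mk_eq_zero _).2 hk
  · intro r hr m
    rw [(Submodule.mem_bot R).1 hr, zero_smul]

/-- `dim R/a ≤ 1` -/
def Dim1 (a : Ideal R) : Prop := ∀ p q r : Ideal R, p.IsPrime → q.IsPrime → r.IsPrime →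
  a ≤ p → p < q → q < r → False

lemma Dim1.minimal {a : Ideal R} (h : Dim1 a) (q : Ideal R) (hq : q.IsPrime) (hqm : ¬ q.IsMaximal) (haq : a ≤ q) :
    q ∈ a.minimalPrimes := by
  obtain ⟨p, hp, hpq⟩ := Ideal.exists_minimalPrimes_le haq
  obtain ⟨m, hm, hqm'⟩ := Ideal.exists_le_maximal q hq.ne_top
  rcases hpq.lt_or_eq with h1 | rfl
  · refine (h p q m hp.1.1 hq hm.isPrime hp.1.2 h1 (lt_of_le_of_ne hqm' ?_)).elim
    rintro rfl
    exact hqm hm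
  · exact hp

/-- one dimensional theorem -/
theorem dimOne (a : Ideal R) (hd : Dim1 a) (M : Type u) [AddCommGroup M] [Module R M] (hM : ATor a M)
    (h0 : Module.Finite R (E R (R ⧸ a) M 0)) (h1 : Module.Finite R (E R (R ⧸ a) M 1))
    (j : ℕ) : Module.Finite R (E R (R ⧸ a) M j) := by
  refine thmT (fgSC R) a.minimalPrimes a ?_ (fun M _ _ hM h => h2_main a.minimalPrimes
    (Ideal.finite_minimalPrimes_of_isNoetherianRing R a) (fun p hp => hp.1.1) a (fun p hp => hp) M hM ?_) ⊥ M hM ?_ h0 h1 j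
  · intro G _ _ hG hG0 ⟨n, hn⟩ j
    let K := Submodule.torsionBySet R G ((a ^ n : Ideal R) : Set R)
    have hK : (fgSC R).mem K := by
      refine SC.of_killed (a := a) n ?_ (SC.lesCov₀ K.subtype (Submodule.injective_subtype _) hG0)
      intro r hr w
      exact Subtype.ext (tsub w r hr)
    have hW0 : (fgSC R).mem (E R (R ⧸ a) (G ⧸ K) 0) :=
      SC.lesCov₃ K.subtype K.mkQ (Submodule.injective_subtype _)
        (LinearMap.exact_subtype_mkQ _) (Submodule.mkQ_surjective _) 0 hG0 (SC.ext hK 1)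
    have hms : MSupp R (G ⧸ K) := by
      intro q hq hqm w
      obtain ⟨g, rfl⟩ := K.mkQ_surjective w
      by_cases haq : a ≤ q
      · obtain ⟨s, hs, hs2⟩ := hn q (hd.minimal q hq hqm haq) g
        refine ⟨s, hs, ?_⟩
        rw [← map_smul]
        refine (Submodule.Quotient.mk_eq_zero _).2 ?_
        rw [Submodule.mem_torsionBySet_iff]
        rintro ⟨r, hr⟩
        change r • s • g = 0
        rw [smul_comm]
        exact hs2 r hr
      · obtain ⟨s, hs, hsq⟩ := SetLike.not_le_iff_exists.1 haq
        obtain ⟨k, hk⟩ := hG g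
        refine ⟨s ^ k, fun h => hsq (hq.mem_of_pow_mem k h), ?_⟩
        rw [← map_smul, hk _ (Ideal.pow_mem_pow hs k), map_zero]
    have hfin : Module.Finite R (Submodule.torsionBySet R (G ⧸ K) (a : Set R)) := (SC.hom_iff a).1 hW0
    have : IsArtinian R (Submodule.torsionBySet R (G ⧸ K) (a : Set R)) :=
      (hms.inj (Submodule.subtype _) (Submodule.injective_subtype _)).art
    have hart : IsArtinian R (G ⧸ K) := melkersson_ideal a (IsNoetherian.noetherian a) _
      (hG.surj _ K.mkQ_surjective) this
    have hWj := art a ⊥ (G ⧸ K) hart (by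
      intro r hr m
      rw [(Submodule.mem_bot R).1 hr, zero_smul]) hW0 j
    exact SC.lesCov₂ (C := fgSC R) K.subtype K.mkQ (Submodule.injective_subtype _)
        (LinearMap.exact_subtype_mkQ _) (Submodule.mkQ_surjective _) j (SC.ext hK j) hWj
  · exact SC.fin _ _ h
  · intro r hr m
    rw [(Submodule.mem_bot R).1 hr, zero_smul]

end
end Cof

namespace Cof

section
variable {R : Type u} [CommRing R]

/-- `dim R/a ≤ 2` -/
def Dim2 (a : Ideal R) : Prop := ∀ p q r s : Ideal R, p.IsPrime → q.IsPrime → r.IsPrime → s.IsPrime →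
  a ≤ p → p < q → q < r → r < s → False

/-- minimal primes of `a` of dimension at least 2 -/
def T2 (a : Ideal R) : Set (Ideal R) := {p | p ∈ a.minimalPrimes ∧ ∃ q r : Ideal R, q.IsPrime ∧ r.IsPrime ∧ p < q ∧ q < r}

lemma T2.prime {a : Ideal R} : ∀ p ∈ T2 a, p.IsPrime := fun p hp => hp.1.1.1

lemma T2.finite [IsNoetherianRing R] (a : Ideal R) : (T2 a).Finite :=
  (Ideal.finite_minimalPrimes_of_isNoetherianRing R a).subset fun _ h => h.1

lemma Dim2.dim1 [IsNoetherianRing R] {a : Ideal R} (h : Dim2 a) (y : R) (hy : ∀ p ∈ T2 a, y ∉ p) : Dim1 (a ⊔ Ideal.span {y}) := by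
  intro p q r hp hq hr hap hpq hqr
  obtain ⟨p0, hp0, hle⟩ := Ideal.exists_minimalPrimes_le (le_sup_left.trans hap)
  have hyp : y ∈ p := hap (Ideal.mem_sup_right (Ideal.mem_span_singleton_self y))
  rcases hle.lt_or_eq with h1 | rfl
  · exact h p0 p q r hp0.1.1 hp hq hr hp0.1.2 h1 hpq hqr
  · exact hy p0 ⟨hp0, q, r, hq, hr, hpq, hqr⟩ hyp

lemma Dim2.loc [IsNoetherianRing R] {a : Ideal R} (h : Dim2 a) (p : Ideal R) [hp : p.IsPrime] (hpm : ¬ p.IsMaximal) :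
    Dim1 (R := Localization.AtPrime p) (a.map (algebraMap R (Localization.AtPrime p))) := by
  intro P Q Q' hP hQ hQ' haP h1 h2
  set A := Localization.AtPrime p
  obtain ⟨m, hm, hpm'⟩ := Ideal.exists_le_maximal p hp.ne_top
  have hlt : p < m := lt_of_le_of_ne hpm' (by rintro rfl; exact hpm hm)
  have hmono : ∀ I J : Ideal A, I < J → I.comap (algebraMap R A) < J.comap (algebraMap R A) := by
    intro I J hIJ
    refine lt_of_le_of_ne (Ideal.comap_mono hIJ.le) fun he => hIJ.ne ?_
    rw [← IsLocalization.map_under p.primeCompl A I, ← IsLocalization.map_under p.primeCompl A J]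
    exact congrArg (Ideal.map (algebraMap R A)) he
  have h5 : Ideal.comap (algebraMap R A) (IsLocalRing.maximalIdeal A) = p :=
    Localization.AtPrime.under_maximalIdeal ..
  have h6 : Q'.comap (algebraMap R A) ≤ p :=
    (Ideal.comap_mono (IsLocalRing.le_maximalIdeal hQ'.ne_top)).trans h5.le
  exact h (P.comap (algebraMap R A)) (Q.comap (algebraMap R A)) (Q'.comap (algebraMap R A)) m
    inferInstance inferInstance inferInstance hm.isPrime (Ideal.map_le_iff_le_comap.1 haP) (hmono _ _ h1) (hmono _ _ h2)
    (h6.trans_lt hlt)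

lemma ATor.sup {a : Ideal R} {X : Type u} [AddCommGroup X] [Module R X] (h : ATor a X) (y : R) (hy : ∀ x : X, y • x = 0) :
    ATor (a ⊔ Ideal.span {y}) X := by
  have key : ∀ n : ℕ, (a ⊔ Ideal.span {y}) ^ n ≤ a ^ n ⊔ Ideal.span {y} := by
    intro n
    induction n with
    | zero => simp
    | succ n ih =>
      rw [pow_succ]
      refine Ideal.mul_le.2 fun r hr s hs => ?_
      obtain ⟨r1, hr1, r2, hr2, rfl⟩ := Submodule.mem_sup.1 (ih hr)
      obtain ⟨s1, hs1, s2, hs2, rfl⟩ := Submodule.mem_sup.1 hs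
      have e : (r1 + r2) * (s1 + s2) = r1 * s1 + ((r1 + r2) * s2 + s1 * r2) := by ring
      rw [e]
      refine Submodule.add_mem_sup ?_ (add_mem (Ideal.mul_mem_left _ _ hs2) (Ideal.mul_mem_left _ _ hr2))
      rw [pow_succ]
      exact Ideal.mul_mem_mul hr1 hs1
  intro m
  obtain ⟨n, hn⟩ := h m
  refine ⟨n, fun r hr => ?_⟩
  obtain ⟨s, hs, t, ht, rfl⟩ := Submodule.mem_sup.1 (key n hr)
  obtain ⟨c, rfl⟩ := Ideal.mem_span_singleton'.1 ht
  rw [add_smul, hn s hs, mul_smul, hy, smul_zero, add_zero]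

variable [IsNoetherianRing R]

theorem cons (a : Ideal R) (y : R) (hd : Dim1 (a ⊔ Ideal.span {y})) (M : Type u) [AddCommGroup M] [Module R M]
    (hM : ATor a M) (h : ∀ i ≤ 2, Module.Finite R (E R (R ⧸ a) M i)) (j : ℕ) :
    Module.Finite R (tor y (E R (R ⧸ a) M j)) := by
  set b := a ⊔ Ideal.span {y} with hb
  have hab : a ≤ b := le_sup_left
  have hbM : ∀ i ≤ 2, (fgSC R).mem (E R (R ⧸ b) M i) := fun i hi =>
    lemmaA (C := fgSC R) h i hi ((ATor.quot b).mono hab)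
  let Y := LinearMap.range (ml y M)
  have hg : Function.Surjective (ml y M).rangeRestrict := LinearMap.surjective_rangeRestrict _
  have hex : Function.Exact (tor y M).subtype (ml y M).rangeRestrict := by
    intro x
    rw [← LinearMap.mem_ker, LinearMap.ker_rangeRestrict]
    exact ⟨fun h => ⟨⟨x, h⟩, rfl⟩, by rintro ⟨x, rfl⟩; exact x.2⟩
  have hi := Submodule.injective_subtype (tor y M)
  have hY0 : (fgSC R).mem (E R (R ⧸ b) Y 0) := SC.lesCov₀ Y.subtype (Submodule.injective_subtype _) (hbM 0 (by omega))
  have h10 : (fgSC R).mem (E R (R ⧸ b) (tor y M) 0) := SC.lesCov₀ _ hi (hbM 0 (by omega))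
  have h11 : (fgSC R).mem (E R (R ⧸ b) (tor y M) 1) :=
    SC.lesCov₁ _ _ hi hex hg 0 hY0 (hbM 1 (by omega))
  have h1T : ATor b (tor y M) := ATor.sup (hM.inj _ hi) y (fun x => Subtype.ext x.2)
  have h1 : ∀ j, (fgSC R).mem (E R (R ⧸ b) (tor y M) j) := dimOne b hd _ h1T h10 h11
  have hY : ∀ i ≤ 2, (fgSC R).mem (E R (R ⧸ b) Y i) := fun i hi' =>
    SC.lesCov₃ _ _ hi hex hg i (hbM i hi') (h1 (i + 1))
  have hiY := Submodule.injective_subtype Y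
  have hex2 := LinearMap.exact_subtype_mkQ Y
  have hQ0 : (fgSC R).mem (E R (R ⧸ b) (quo y M) 0) :=
    SC.lesCov₃ _ _ hiY hex2 Y.mkQ_surjective 0 (hbM 0 (by omega)) (hY 1 (by omega))
  have hQ1 : (fgSC R).mem (E R (R ⧸ b) (quo y M) 1) :=
    SC.lesCov₃ _ _ hiY hex2 Y.mkQ_surjective 1 (hbM 1 (by omega)) (hY 2 (by omega))
  have hQT : ATor b (quo y M) := ATor.sup (hM.surj _ Y.mkQ_surjective) y (by
    intro x
    obtain ⟨x, rfl⟩ := Y.mkQ_surjective x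
    rw [← map_smul]
    exact (Submodule.Quotient.mk_eq_zero _).2 ⟨x, rfl⟩)
  have hQ : ∀ j, (fgSC R).mem (E R (R ⧸ b) (quo y M) j) := dimOne b hd _ hQT hQ0 hQ1
  have hyb : ∀ n : R ⧸ b, y • n = 0 := by
    intro n
    obtain ⟨n, rfl⟩ := Ideal.Quotient.mk_surjective n
    rw [← Ideal.Quotient.mk_eq_mk, ← Submodule.Quotient.mk_smul]
    exact (Submodule.Quotient.mk_eq_zero _).2 (b.mul_mem_right _ (Ideal.mem_sup_right (Ideal.mem_span_singleton_self y)))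
  have hall : ∀ j, (fgSC R).mem (E R (R ⧸ b) M j) := fun j => SC.Y1 y hyb j (h1 j) (fun k _ => hQ k)
  refine SC.Y2 (C := fgSC R) y a (fun j N _ _ hN hT hk => ?_) j (ATor.quot a)
  exact lemmaA (C := fgSC R) (d := j) (a := b) (fun i _ => hall i) j le_rfl (ATor.sup hT y hk)

end
end Cof

namespace Cof
open TensorProduct

lemma cokerIso {S : Type u} [CommRing S] {A B C A' B' C' : Type u} [AddCommGroup A] [Module S A] [AddCommGroup B] [Module S B]
    [AddCommGroup C] [Module S C] [AddCommGroup A'] [Module S A'] [AddCommGroup B'] [Module S B'] [AddCommGroup C'] [Module S C']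
    (f : A →ₗ[S] B) (g : B →ₗ[S] C) (f' : A' →ₗ[S] B') (g' : B' →ₗ[S] C') (h : Function.Exact f g) (hg : Function.Surjective g)
    (h' : Function.Exact f' g') (hg' : Function.Surjective g') (α : A ≃ₗ[S] A') (β : B ≃ₗ[S] B')
    (hc : ∀ x, β (f x) = f' (α x)) : Nonempty (C ≃ₗ[S] C') := by
  have e1 := g.quotKerEquivOfSurjective hg
  have e2 := g'.quotKerEquivOfSurjective hg'
  refine ⟨e1.symm.trans ((Submodule.Quotient.equiv _ _ β ?_).trans e2)⟩
  rw [h.linearMap_ker_eq, h'.linearMap_ker_eq]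
  ext y
  constructor
  · rintro ⟨_, ⟨x, rfl⟩, rfl⟩
    exact ⟨α x, (hc x).symm⟩
  · rintro ⟨x, rfl⟩
    exact ⟨f (α.symm x), ⟨_, rfl⟩, by
      change β _ = _
      rw [hc, α.apply_symm_apply]⟩

section
variable {R : Type u} [CommRing R] [IsNoetherianRing R] (S : Type u) [CommRing S] [Algebra R S] [Module.Flat R S]
variable (M : Type u) [AddCommGroup M] [Module R M]

noncomputable def bc0 (N : Type u) [AddCommGroup N] [Module R N] [Module.Finite R N] :
    S ⊗[R] E R N M 0 ≃ₗ[S] E S (S ⊗[R] N) (S ⊗[R] M) 0 :=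
  have : Module.FinitePresentation R N := Module.finitePresentation_of_finite R N
  ((e0 R N M).baseChange R S).trans
    ((Module.FinitePresentation.isBaseChange_map R N M S).equiv.trans (e0 S (S ⊗[R] N) (S ⊗[R] M)).symm)

lemma bc0_tmul (N : Type u) [AddCommGroup N] [Module R N] [Module.Finite R N] (s : S) (x : E R N M 0) :
    e0 S (S ⊗[R] N) (S ⊗[R] M) (bc0 S M N (s ⊗ₜ x)) = s • (e0 R N M x).baseChange S := by
  simp [bc0, IsBaseChange.equiv_tmul]

lemma bc0_con {K F : Type u} [AddCommGroup K] [Module R K] [Module.Finite R K] [AddCommGroup F] [Module R F] [Module.Finite R F]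
    (ι : K →ₗ[R] F) (x : S ⊗[R] E R F M 0) :
    bc0 S M K ((con M ι 0).baseChange S x) = con (S ⊗[R] M) (ι.baseChange S) 0 (bc0 S M F x) := by
  induction x with
  | zero => simp
  | add x y hx hy => simp only [map_add, hx, hy]
  | tmul s x =>
    apply (e0 S _ _).injective
    rw [e0_con, bc0_tmul, LinearMap.baseChange_tmul, bc0_tmul, e0_con, LinearMap.baseChange_comp]
    rfl

/-- flat base change for Ext -/
theorem bc (i : ℕ) (N : Type u) [AddCommGroup N] [Module R N] [Module.Finite R N] :
    Nonempty (S ⊗[R] E R N M i ≃ₗ[S] E S (S ⊗[R] N) (S ⊗[R] M) i) := by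
  induction i generalizing N with
  | zero => exact ⟨bc0 S M N⟩
  | succ i ih =>
    obtain ⟨n, f, hf⟩ := Module.Finite.exists_fin' R N
    let F := ULift.{u} (Fin n) → R
    let f' : F →ₗ[R] N := f ∘ₗ (LinearMap.funLeft R R ULift.up)
    have hf' : Function.Surjective f' := by
      refine hf.comp ?_
      exact LinearMap.funLeft_surjective_of_injective R R _ ULift.up_injective
    let K := LinearMap.ker f'
    let ι : K →ₗ[R] F := K.subtype
    have hι : Function.Injective ι := K.injective_subtype
    have hex : Function.Exact ι f' := LinearMap.exact_subtype_ker_map f'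
    have hι' : Function.Injective (ι.baseChange S) := Module.Flat.lTensor_preserves_injective_linearMap _ hι
    have hex' : Function.Exact (ι.baseChange S) (f'.baseChange S) := lTensor_exact S hex hf'
    have hf'' : Function.Surjective (f'.baseChange S) := LinearMap.lTensor_surjective S hf'
    obtain ⟨δ, h1, h2⟩ := con_exact₃ (M := M) ι f' hι hex hf' i
    obtain ⟨δ', h1', h2'⟩ := con_exact₃ (M := S ⊗[R] M) _ _ hι' hex' hf'' i
    have z := proj_zero (R := R) (N := F) (M := M)
    have z' := proj_zero (R := S) (N := S ⊗[R] F) (M := S ⊗[R] M)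
    have hδ : Function.Surjective δ := fun x => (h2 x).1 ((z i).elim _ _)
    have hδ' : Function.Surjective δ' := fun x => (h2' x).1 ((z' i).elim _ _)
    cases i with
    | zero =>
      exact cokerIso ((con M ι 0).baseChange S) (δ.baseChange S) _ _ (lTensor_exact S h1 hδ : Function.Exact ((con M ι 0).baseChange S) (δ.baseChange S))
        (LinearMap.lTensor_surjective S hδ) h1' hδ' (bc0 S M F) (bc0 S M K) (bc0_con S M ι)
    | succ i =>
      have inj : Function.Injective δ := by
        rw [← LinearMap.ker_eq_bot, LinearMap.ker_eq_bot']
        intro m hm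
        obtain ⟨x, rfl⟩ := (h1 m).1 hm
        rw [(z i).elim x 0, map_zero]
      have inj' : Function.Injective δ' := by
        rw [← LinearMap.ker_eq_bot, LinearMap.ker_eq_bot']
        intro m hm
        obtain ⟨x, rfl⟩ := (h1' m).1 hm
        rw [(z' i).elim x 0, map_zero]
      obtain ⟨e⟩ := ih K
      exact ⟨((LinearEquiv.ofBijective δ ⟨inj, hδ⟩).symm.baseChange R S).trans
        (e.trans (LinearEquiv.ofBijective δ' ⟨inj', hδ'⟩))⟩

noncomputable def eCongr {R : Type u} [CommRing R] {N N' M : Type u} [AddCommGroup N] [Module R N] [AddCommGroup N'] [Module R N'] [AddCommGroup M] [Module R M]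
    (e : N ≃ₗ[R] N') (i : ℕ) : E R N M i ≃ₗ[R] E R N' M i :=
  LinearEquiv.ofLinearMap (con M e.symm.toLinearMap i) (con M e.toLinearMap i)
    (by
      ext x
      rw [LinearMap.comp_apply, con_comp]
      have : e.toLinearMap ∘ₗ e.symm.toLinearMap = (1 : R) • LinearMap.id := by ext; simp
      rw [this, con_smul, one_smul]; rfl)
    (by
      ext x
      rw [LinearMap.comp_apply, con_comp]
      have : e.symm.toLinearMap ∘ₗ e.toLinearMap = (1 : R) • LinearMap.id := by ext; simp
      rw [this, con_smul, one_smul]; rfl)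

theorem bcQuot (a : Ideal R) (i : ℕ) :
    Nonempty (S ⊗[R] E R (R ⧸ a) M i ≃ₗ[S] E S (S ⧸ a.map (algebraMap R S)) (S ⊗[R] M) i) := by
  obtain ⟨e⟩ := bc (R := R) S M i (R ⧸ a)
  refine ⟨e.trans (eCongr ?_ i)⟩
  exact (Algebra.TensorProduct.quotIdealMapEquivTensorQuot S a).symm.toLinearEquiv

omit [IsNoetherianRing R] [Module.Flat R S] in
theorem bc_ATor (a : Ideal R) (h : ATor a M) : ATor (a.map (algebraMap R S)) (S ⊗[R] M) := by
  intro x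
  induction x with
  | zero => exact ⟨0, fun _ _ => smul_zero _⟩
  | tmul s m =>
    obtain ⟨n, hn⟩ := h m
    refine ⟨n, ?_⟩
    rw [← Ideal.map_pow]
    have : (a ^ n).map (algebraMap R S) ≤ LinearMap.ker (LinearMap.toSpanSingleton S (S ⊗[R] M) (s ⊗ₜ[R] m)) := by
      rw [Ideal.map_le_iff_le_comap]
      intro r hr
      change algebraMap R S r • (s ⊗ₜ[R] m) = 0
      rw [algebraMap_smul, ← TensorProduct.tmul_smul, hn r hr, TensorProduct.tmul_zero]
    exact fun r hr => this hr
  | add x y hx hy =>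
    obtain ⟨n, hn⟩ := hx
    obtain ⟨k, hk⟩ := hy
    refine ⟨max n k, fun r hr => ?_⟩
    rw [smul_add, hn r (Ideal.pow_le_pow_right (le_max_left _ _) hr), hk r (Ideal.pow_le_pow_right (le_max_right _ _) hr), add_zero]

theorem bc_fin (a : Ideal R) (i : ℕ) (h : Module.Finite R (E R (R ⧸ a) M i)) :
    Module.Finite S (E S (S ⧸ a.map (algebraMap R S)) (S ⊗[R] M) i) := by
  obtain ⟨e⟩ := bcQuot S M a i
  exact Module.Finite.equiv e

end
end Cof

namespace Cof
open TensorProduct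
section
variable {R : Type u} [CommRing R] [IsNoetherianRing R]

lemma tor_quot_fin {X : Type u} [AddCommGroup X] [Module R X] (y : R) (F : Submodule R X) (hF : F.FG)
    (h : Module.Finite R (tor y X)) : Module.Finite R (tor y (X ⧸ F)) := by
  let K := Submodule.comap (ml y X) F
  have hF' : Module.Finite R F := Module.Finite.iff_fg.2 hF
  let g : K →ₗ[R] F := (ml y X).restrict (fun x hx => hx)
  have hle : tor y X ≤ K := fun x hx => by
    change y • x ∈ F
    have : y • x = 0 := hx
    rw [this]; exact zero_mem _
  have hK : (fgSC R).mem K := by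
    refine (fgSC R).ex (Submodule.inclusion hle) g ?_ h hF'
    intro x
    constructor
    · intro hx
      exact ⟨⟨x.1, congrArg Subtype.val hx⟩, rfl⟩
    · rintro ⟨x, rfl⟩
      exact Subtype.ext x.2
  let φ : K →ₗ[R] tor y (X ⧸ F) := LinearMap.codRestrict _ (F.mkQ ∘ₗ K.subtype) (by
    intro x
    change y • F.mkQ x.1 = 0
    rw [← map_smul]
    exact (Submodule.Quotient.mk_eq_zero _).2 x.2)
  refine SC.surj (C := fgSC R) hK φ ?_
  rintro ⟨x, hx⟩
  obtain ⟨x, rfl⟩ := F.mkQ_surjective x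
  refine ⟨⟨x, ?_⟩, rfl⟩
  change y • F.mkQ x = 0 at hx
  rw [← map_smul] at hx
  exact (Submodule.Quotient.mk_eq_zero F).1 hx

omit [IsNoetherianRing R] in
lemma loc_fg {X : Type u} [AddCommGroup X] [Module R X] (p : Ideal R) [p.IsPrime]
    (h : Module.Finite (Localization.AtPrime p) (Localization.AtPrime p ⊗[R] X)) :
    ∃ F : Submodule R X, F.FG ∧ ∀ x, ∃ s, s ∉ p ∧ s • x ∈ F := by
  set A := Localization.AtPrime p
  have inst : ∀ (Y : Type u) [AddCommGroup Y] [Module R Y], IsLocalizedModule p.primeCompl (TensorProduct.mk R A Y 1) := by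
    intro Y _ _
    exact (isLocalizedModule_iff_isBaseChange p.primeCompl A _).2 (TensorProduct.isBaseChange R Y A)
  obtain ⟨t, ht⟩ := h.1
  have hX := inst X
  choose w hw using IsLocalizedModule.surj p.primeCompl (TensorProduct.mk R A X 1)
  let F := Submodule.span R ((fun g => (w g).1) '' (t : Set (A ⊗[R] X)))
  refine ⟨F, Submodule.fg_span (t.finite_toSet.image _), fun x => ?_⟩
  have hQ := inst (X ⧸ F)
  have hker : (⊤ : Submodule A (A ⊗[R] X)) ≤ LinearMap.ker (F.mkQ.baseChange A) := by
    rw [← ht, Submodule.span_le]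
    intro g hg
    rw [SetLike.mem_coe, LinearMap.mem_ker, ← Submodule.mem_bot A]
    refine loc_mem p.primeCompl _ (w g).2.1 (w g).2.2 _ ?_
    have h1 : (w g).2.1 • g = TensorProduct.mk R A X 1 (w g).1 := hw g
    rw [Submodule.mem_bot, ← algebraMap_smul A, ← map_smul, algebraMap_smul, h1]
    change (1 : A) ⊗ₜ[R] F.mkQ (w g).1 = 0
    rw [show F.mkQ (w g).1 = 0 from (Submodule.Quotient.mk_eq_zero _).2 (Submodule.subset_span ⟨g, hg, rfl⟩), TensorProduct.tmul_zero]
  have h2 : TensorProduct.mk R A (X ⧸ F) 1 (F.mkQ x) = 0 := hker (x := (1 : A) ⊗ₜ[R] x) trivial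
  obtain ⟨c, hc⟩ := (IsLocalizedModule.eq_zero_iff p.primeCompl (TensorProduct.mk R A (X ⧸ F) 1)).1 h2
  refine ⟨c.1, c.2, ?_⟩
  have hc' : c.1 • F.mkQ x = 0 := hc
  rw [← map_smul] at hc'
  exact (Submodule.Quotient.mk_eq_zero _).1 hc'

omit [IsNoetherianRing R] in
lemma ext_killed (a : Ideal R) (M : Type u) [AddCommGroup M] [Module R M] (j : ℕ) (y : R) (hy : y ∈ a) (x : E R (R ⧸ a) M j) :
    y • x = 0 := by
  have hyb : ∀ n : R ⧸ a, y • n = 0 := by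
    intro n
    obtain ⟨n, rfl⟩ := Ideal.Quotient.mk_surjective n
    rw [← Ideal.Quotient.mk_eq_mk, ← Submodule.Quotient.mk_smul]
    exact (Submodule.Quotient.mk_eq_zero _).2 (a.mul_mem_right _ hy)
  rw [← con_smul, show (y • LinearMap.id : (R ⧸ a) →ₗ[R] (R ⧸ a)) = 0 by ext n; simp [hyb]]
  simp [con_apply]

theorem stepA (a : Ideal R) (hd : Dim2 a) (M : Type u) [AddCommGroup M] [Module R M] (hM : ATor a M)
    (h : ∀ i ≤ 2, Module.Finite R (E R (R ⧸ a) M i)) (j : ℕ) :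
    ∃ F : Submodule R (E R (R ⧸ a) M j), F.FG ∧ IsArtinian R (E R (R ⧸ a) M j ⧸ F) := by
  obtain ⟨f, hf, F0, hF0, hfF⟩ := generic (T2 a) (T2.finite a) T2.prime a (fun p hp => hp.1) M hM
    ((genSC _).fin _ (h 0 (by omega))) ((genSC _).fin _ (h 1 (by omega))) j
  have hd1 : Dim1 (a ⊔ Ideal.span {f}) := hd.dim1 f hf
  have htor := cons a f hd1 M hM h j
  set X := E R (R ⧸ a) M j
  let P : Set (Ideal R) := {p | p ∈ (a ⊔ Ideal.span {f}).minimalPrimes ∧ ¬ p.IsMaximal}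
  have hP : P.Finite := (Ideal.finite_minimalPrimes_of_isNoetherianRing R _).subset fun _ h => h.1
  have hloc : ∀ p : P, ∃ F : Submodule R X, F.FG ∧ ∀ x, ∃ s, s ∉ p.1 ∧ s • x ∈ F := by
    rintro ⟨p, hp, hpm⟩
    have := hp.1.1
    have : IsNoetherianRing (Localization.AtPrime p) := IsLocalization.isNoetherianRing p.primeCompl _ inferInstance
    apply loc_fg p
    obtain ⟨e⟩ := bcQuot (Localization.AtPrime p) M a j
    have hfin := dimOne (R := Localization.AtPrime p) _ (hd.loc p hpm) (Localization.AtPrime p ⊗[R] M)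
      (bc_ATor (Localization.AtPrime p) M a hM)
      (bc_fin _ M a 0 (h 0 (by omega))) (bc_fin _ M a 1 (h 1 (by omega))) j
    exact Module.Finite.equiv e.symm
  choose G hG hG2 using hloc
  have := hP.to_subtype
  let F := F0 ⊔ ⨆ p : P, G p
  have hF : F.FG := hF0.sup (Submodule.fg_iSup _ hG)
  refine ⟨F, hF, ?_⟩
  have hQ : ∀ w : X ⧸ F, ∃ n : ℕ, f ^ n • w = 0 := by
    intro w
    obtain ⟨w, rfl⟩ := F.mkQ_surjective w
    obtain ⟨n, hn⟩ := hfF w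
    refine ⟨n, ?_⟩
    rw [← map_smul]
    exact (Submodule.Quotient.mk_eq_zero _).2 (Submodule.mem_sup_left hn)
  have hms : MSupp R (X ⧸ F) := by
    intro q hq hqm w
    by_cases haq : a ≤ q
    · by_cases hfq : f ∈ q
      · have hq2 : q ∈ P := ⟨hd1.minimal q hq hqm (sup_le haq ((Ideal.span_singleton_le_iff_mem _).2 hfq)), hqm⟩
        obtain ⟨w, rfl⟩ := F.mkQ_surjective w
        obtain ⟨s, hs, hs2⟩ := hG2 ⟨q, hq2⟩ w
        refine ⟨s, hs, ?_⟩
        rw [← map_smul]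
        exact (Submodule.Quotient.mk_eq_zero _).2 (Submodule.mem_sup_right (Submodule.mem_iSup_of_mem _ hs2))
      · obtain ⟨n, hn⟩ := hQ w
        exact ⟨f ^ n, fun h => hfq (hq.mem_of_pow_mem n h), hn⟩
    · obtain ⟨s, hs, hsq⟩ := SetLike.not_le_iff_exists.1 haq
      obtain ⟨w, rfl⟩ := F.mkQ_surjective w
      exact ⟨s, hsq, by rw [← map_smul, ext_killed a M j s hs, map_zero]⟩
  have hfin : Module.Finite R (tor f (X ⧸ F)) := tor_quot_fin f F hF htor
  have : IsArtinian R (tor f (X ⧸ F)) := (hms.inj _ (Submodule.injective_subtype _)).art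
  exact melkersson f hQ

end
end Cof

namespace Cof

def MinNF (R : Type u) [CommRing R] (D : Type u) [AddCommGroup D] [Module R D] : Prop :=
  ¬ Module.Finite R D ∧ ∀ V : Submodule R D, V ≠ ⊤ → V.FG

section
variable {R : Type u} [CommRing R] [IsNoetherianRing R] {D : Type u} [AddCommGroup D] [Module R D]

omit [IsNoetherianRing R] in
lemma MinNF.alt (h : MinNF R D) (s : R) :
    (∀ d : D, s • d = 0) ∨ (Function.Surjective (ml s D) ∧ Module.Finite R (tor s D)) := by
  by_cases hr : LinearMap.range (ml s D) = ⊤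
  · by_cases hk : tor s D = ⊤
    · left
      intro d
      have : d ∈ tor s D := hk ▸ trivial
      simpa using this
    · right
      exact ⟨LinearMap.range_eq_top.mp hr, Module.Finite.iff_fg.mpr (h.2 _ hk)⟩
  · left
    have h1 := h.2 _ hr
    by_contra hcon
    have hk : tor s D ≠ ⊤ := by
      intro hk
      apply hcon
      intro d
      have : d ∈ tor s D := hk ▸ trivial
      simpa using this
    have h2 := h.2 _ hk
    apply h.1
    refine ⟨?_⟩
    refine Submodule.fg_of_fg_map_of_fg_inf_ker (ml s D) ?_ ?_
    · rw [Submodule.map_top]; exact h1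
    · rw [top_inf_eq]; exact h2

omit [IsNoetherianRing R] in
lemma MinNF.equiv {D' : Type u} [AddCommGroup D'] [Module R D'] (h : MinNF R D) (e : D ≃ₗ[R] D') : MinNF R D' := by
  refine ⟨fun hf => h.1 (Module.Finite.equiv e.symm), fun V hV => ?_⟩
  have : (V.comap e.toLinearMap).FG := by
    apply h.2
    intro ht
    apply hV
    rw [eq_top_iff]
    intro x _
    have : e.symm x ∈ V.comap e.toLinearMap := ht ▸ trivial
    simpa using this
  have h2 := this.map e.toLinearMap
  rwa [Submodule.map_comap_eq_of_surjective e.surjective] at h2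

omit [IsNoetherianRing R] in
lemma exists_minNF (Q : Type u) [AddCommGroup Q] [Module R Q] [IsArtinian R Q] (h : ¬ Module.Finite R Q) :
    ∃ D : Submodule R Q, MinNF R D := by
  have hne : {V : Submodule R Q | ¬ V.FG}.Nonempty := ⟨⊤, fun ht => h ⟨ht⟩⟩
  obtain ⟨D, hD, hmin⟩ := IsArtinian.set_has_minimal _ hne
  refine ⟨D, fun hf => hD (Module.Finite.iff_fg.mp hf), fun V hV => ?_⟩
  by_contra hfg
  have hle : V.map D.subtype ≤ D := Submodule.map_subtype_le D V
  have hlt : V.map D.subtype < D := by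
    refine lt_of_le_of_ne hle fun he => hV ?_
    rw [eq_top_iff]
    intro x _
    have : (x : Q) ∈ V.map D.subtype := he.symm ▸ x.2
    obtain ⟨y, hy, hyx⟩ := this
    have : y = x := Subtype.ext hyx
    exact this ▸ hy
  refine hmin _ ?_ hlt
  intro hf
  exact hfg (Submodule.fg_of_fg_map_injective D.subtype D.subtype_injective hf)

lemma MinNF.local [IsArtinian R D] (h : MinNF R D) : ∃ m : Ideal R, m.IsMaximal ∧ ATor m D := by
  have hnt : Nontrivial D := by
    by_contra hc
    rw [not_nontrivial_iff_subsingleton] at hc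
    exact h.1 inferInstance
  obtain ⟨V, hV⟩ := IsAtomic.exists_atom (Submodule R D)
  have hs : IsSimpleModule R V := isSimpleModule_iff_isAtom.mpr hV
  obtain ⟨m, hm, ⟨e⟩⟩ := isSimpleModule_iff_quot_maximal.mp hs
  set d : D := ((e.symm (Ideal.Quotient.mk m 1) : V) : D) with hd
  have hd0 : d ≠ 0 := by
    intro h0
    have h1 : e.symm (Ideal.Quotient.mk m 1) = 0 := Subtype.ext h0
    rw [LinearEquiv.map_eq_zero_iff, Ideal.Quotient.eq_zero_iff_mem] at h1
    exact hm.ne_top ((Ideal.eq_top_iff_one _).mpr h1)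
  have hdm : ∀ r ∈ m, r • d = 0 := by
    intro r hr
    have : r • (Ideal.Quotient.mk m 1) = 0 := by
      rw [Algebra.smul_def, Ideal.Quotient.algebraMap_eq, ← map_mul, Ideal.Quotient.eq_zero_iff_mem]
      simpa using hr
    have h2 := congrArg (fun z => ((e.symm z : V) : D)) this
    simpa only [map_smul, map_zero, Submodule.coe_smul, Submodule.coe_zero] using h2
  have key : ∀ s ∈ m, ∀ x : D, ∃ n : ℕ, s ^ n • x = 0 := by
    intro s hs
    rcases h.alt s with h0 | ⟨hsurj, -⟩
    · intro x; exact ⟨1, by simpa using h0 x⟩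
    by_contra! hcon
    obtain ⟨x, hx⟩ := hcon
    let G : ℕ →o Submodule R D := ⟨fun n => tor (s ^ n) D, by
      intro a b hab y hy
      simp only [LinearMap.mem_ker, LinearMap.smul_apply, LinearMap.id_apply] at hy ⊢
      obtain ⟨c, rfl⟩ := Nat.exists_eq_add_of_le hab
      rw [pow_add, mul_comm, mul_smul, hy, smul_zero]⟩
    have hG : ∀ n y, y ∈ G n ↔ s ^ n • y = 0 := by intro n y; exact Iff.rfl
    have hne : (⨆ n, G n) ≠ ⊤ := by
      intro ht
      have : x ∈ ⨆ n, G n := ht ▸ trivial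
      rw [Submodule.mem_iSup_of_directed _ G.monotone.directed_le] at this
      obtain ⟨n, hn⟩ := this
      exact hx n ((hG _ _).mp hn)
    have hfg := h.2 _ hne
    have : ∃ n, (⨆ n, G n) ≤ G n := by
      obtain ⟨T, hT⟩ := hfg
      have hT' : ∀ t ∈ T, ∃ n, t ∈ G n := by
        intro t ht
        have : t ∈ ⨆ n, G n := hT ▸ Submodule.subset_span ht
        rwa [Submodule.mem_iSup_of_directed _ G.monotone.directed_le] at this
      choose! f hf using hT'
      refine ⟨T.sup f, ?_⟩
      rw [← hT, Submodule.span_le]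
      intro t ht
      exact G.monotone (Finset.le_sup ht) (hf t ht)
    obtain ⟨n, hn⟩ := this
    have hpow : ∀ k : ℕ, ∃ y : D, s ^ k • y = d := by
      intro k
      induction k with
      | zero => exact ⟨d, by simp⟩
      | succ k ih =>
        obtain ⟨y, hy⟩ := ih
        obtain ⟨z, hz⟩ := hsurj y
        refine ⟨z, ?_⟩
        simp only [LinearMap.smul_apply, LinearMap.id_apply] at hz
        rw [pow_succ, mul_smul, hz, hy]
    obtain ⟨y, hy⟩ := hpow n
    have h1 : y ∈ G (n+1) := by
      rw [hG, pow_succ', mul_smul, hy]; exact hdm s hs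
    have h2 : y ∈ G n := hn (le_iSup (fun n => G n) (n+1) h1)
    rw [hG, hy] at h2
    exact hd0 h2
  refine ⟨m, hm, fun x => ?_⟩
  -- m is contained in radical of annihilator of x
  have hle : m ≤ Ideal.radical (LinearMap.ker (LinearMap.toSpanSingleton R D x)) := by
    intro s hs
    obtain ⟨n, hn⟩ := key s hs x
    exact ⟨n, by simpa using hn⟩
  obtain ⟨n, hn⟩ := Ideal.exists_pow_le_of_le_radical_of_fg hle (IsNoetherian.noetherian m)
  exact ⟨n, fun r hr => by simpa using hn hr⟩

end

section
variable {S : Type u} [CommRing S] [IsNoetherianRing S] {D : Type u} [AddCommGroup D] [Module S D]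

omit [IsNoetherianRing S] in
lemma precomplete_pi (n : Ideal S) [IsPrecomplete n S] (r : ℕ) : IsPrecomplete n (Fin r → S) := by
  refine ⟨fun {f} hf => ?_⟩
  have h1 : ∀ i : Fin r, ∃ L : S, ∀ k, f k i ≡ L [SMOD (n ^ k • ⊤ : Submodule S S)] := by
    intro i
    refine IsPrecomplete.prec' (I := n) (fun k => f k i) ?_
    intro a b hab
    have := hf hab
    rw [SModEq.sub_mem] at this ⊢
    have h2 := Submodule.mem_map_of_mem (f := LinearMap.proj (R := S) (φ := fun _ : Fin r => S) i) this
    rw [Submodule.map_smul''] at h2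
    exact Submodule.smul_mono le_rfl le_top h2
  choose L hL using h1
  refine ⟨L, fun k => ?_⟩
  rw [SModEq.sub_mem]
  have : f k - L = ∑ i, LinearMap.single S (fun _ : Fin r => S) i ((f k - L) i) := by
    simp [LinearMap.coe_single, Finset.univ_sum_single]; rfl
  rw [this]
  refine Submodule.sum_mem _ fun i _ => ?_
  have h2 := Submodule.mem_map_of_mem (f := LinearMap.single S (fun _ : Fin r => S) i) (SModEq.sub_mem.mp (hL i k))
  rw [Submodule.map_smul''] at h2
  exact Submodule.smul_mono le_rfl le_top h2

lemma lemmaB (n : Ideal S) [IsLocalRing S] (hn : n = IsLocalRing.maximalIdeal S) [IsAdicComplete n S]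
    (h : MinNF S D) (ht : ATor n D) (P Q Q' : Ideal S) [P.IsPrime] [Q.IsPrime] [Q'.IsPrime] (h1 : P < Q) (h2 : Q < Q')
    (hP : ∀ s : S, (∀ d : D, s • d = 0) → s ∈ P) : False := by
  obtain ⟨s, hsQ, hsP⟩ := SetLike.exists_of_lt h1
  obtain ⟨hsurj, hfin⟩ : Function.Surjective (ml s D) ∧ Module.Finite S (tor s D) := by
    rcases h.alt s with h0 | h0
    · exact absurd (hP s h0) hsP
    · exact h0
  have hQ'n : Q' ≤ n := hn ▸ IsLocalRing.le_maximalIdeal (Ideal.IsPrime.ne_top inferInstance)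
  have hsn : s ∈ n := hQ'n (h2.le hsQ)
  -- power killing K
  obtain ⟨k, hk⟩ : ∃ k : ℕ, ∀ t ∈ n ^ k, ∀ x ∈ tor s D, t • x = 0 := by
    obtain ⟨T, hT⟩ := Module.Finite.iff_fg.mp hfin
    choose f hf using ht
    refine ⟨T.sup f, fun t htn x hx => ?_⟩
    rw [← hT] at hx
    have : Submodule.span S (T : Set D) ≤ tor t D := by
      rw [Submodule.span_le]
      intro y hy
      simp only [SetLike.mem_coe, LinearMap.mem_ker, LinearMap.smul_apply, LinearMap.id_apply]
      exact hf y t (Ideal.pow_le_pow_right (Finset.le_sup hy) htn)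
    simpa using this hx
  -- factoring through s
  have fac : ∀ φ : D →ₗ[S] D, (∀ x ∈ tor s D, φ x = 0) → ∃ ψ : D →ₗ[S] D, φ = s • ψ := by
    intro φ hφ
    let e := (ml s D).quotKerEquivOfSurjective hsurj
    refine ⟨((tor s D).liftQ φ (fun x hx => hφ x hx)) ∘ₗ e.symm.toLinearMap, ?_⟩
    ext x
    have he : e.symm (s • x) = Submodule.Quotient.mk x := by
      rw [LinearEquiv.symm_apply_eq]
      rfl
    simp only [LinearMap.smul_apply, LinearMap.comp_apply, LinearEquiv.coe_coe]
    rw [← map_smul, ← map_smul, he]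
    rfl
  -- n-adic Hausdorff
  have hH : IsHausdorff n (D →ₗ[S] D) := by
    refine ⟨fun φ hφ => ?_⟩
    ext x
    obtain ⟨k, hk⟩ := ht x
    have h3 := SModEq.sub_mem.mp (hφ k)
    rw [sub_zero] at h3
    have : (n ^ k • ⊤ : Submodule S (D →ₗ[S] D)) ≤ LinearMap.ker (LinearMap.applyₗ (R := S) (M₂ := D) x) := by
      rw [Submodule.smul_le]
      intro r hr ψ _
      simp only [LinearMap.mem_ker, LinearMap.applyₗ_apply_apply, LinearMap.smul_apply]
      rw [← map_smul, hk r hr, map_zero]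
    simpa using this h3
  have hfinH : Module.Finite S (D →ₗ[S] D) := by
    -- restriction
    let ρ : (D →ₗ[S] D) →ₗ[S] (tor s D →ₗ[S] tor s D) :=
      { toFun := fun φ => (φ ∘ₗ (tor s D).subtype).codRestrict (tor s D) (by
          intro x
          have := x.2
          simp only [LinearMap.mem_ker, LinearMap.smul_apply, LinearMap.id_apply] at this
          simp only [LinearMap.mem_ker, LinearMap.smul_apply, LinearMap.id_apply, LinearMap.comp_apply, Submodule.subtype_apply]
          rw [← map_smul, this, map_zero])
        map_add' := fun _ _ => rfl
        map_smul' := fun _ _ => rfl }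
    have hρ : (LinearMap.range ρ).FG := IsNoetherian.noetherian _
    obtain ⟨r, g, hg⟩ := Submodule.fg_iff_exists_fin_generating_family.mp hρ
    have hg' : ∀ i, ∃ φ, ρ φ = g i := by
      intro i
      have : g i ∈ LinearMap.range ρ := hg ▸ Submodule.subset_span ⟨i, rfl⟩
      exact this
    choose φ hφ using hg'
    let f : (Fin r → S) →ₗ[S] (D →ₗ[S] D) := Fintype.linearCombination S φ
    have := precomplete_pi n r
    have hf : Function.Surjective f := by
      refine surjective_of_mkQ_comp_surjective (I := n) ?_
      intro z
      obtain ⟨ψ, rfl⟩ := Submodule.mkQ_surjective _ z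
      have : ρ ψ ∈ Submodule.span S (Set.range g) := hg ▸ ⟨ψ, rfl⟩
      rw [Submodule.mem_span_range_iff_exists_fun] at this
      obtain ⟨c, hc⟩ := this
      refine ⟨c, ?_⟩
      have h3 : ρ (f c - ψ) = 0 := by
        rw [map_sub, ← hc]
        simp [f, Fintype.linearCombination_apply, hφ]
      obtain ⟨ψ', hψ'⟩ := fac (f c - ψ) (fun x hx => congrArg Subtype.val (LinearMap.congr_fun h3 ⟨x, hx⟩))
      rw [LinearMap.comp_apply, ← sub_eq_zero, ← map_sub, hψ', Submodule.mkQ_apply, Submodule.Quotient.mk_eq_zero]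
      exact Submodule.smul_mem_smul hsn trivial
    exact Module.Finite.of_surjective f hf
  have hQle : n ^ k ≤ Q := by
    intro t htk
    obtain ⟨p, hpm, -, hpc, hpa⟩ := LinearMap.exists_monic_and_natDegree_eq_and_coeff_mem_pow_and_aeval_eq_zero S
      (ml t (D →ₗ[S] D)) (Ideal.span {s}) (by
        rintro _ ⟨φ, rfl⟩
        obtain ⟨ψ, hψ⟩ := fac (t • φ) (fun x hx => by
          rw [LinearMap.smul_apply, ← map_smul, hk t htk x hx, map_zero])
        have : ml t (D →ₗ[S] D) φ = s • ψ := by rw [← hψ]; rfl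
        rw [this]
        exact Submodule.smul_mem_smul (Ideal.mem_span_singleton_self s) trivial)
    have e1 : ml t (D →ₗ[S] D) = algebraMap S (Module.End S (D →ₗ[S] D)) t := rfl
    rw [e1, Polynomial.aeval_algebraMap_apply] at hpa
    have h3 : Polynomial.aeval t p ∈ Q := by
      refine h1.le (hP _ fun d => ?_)
      exact LinearMap.congr_fun (LinearMap.congr_fun hpa LinearMap.id) d
    rw [Polynomial.aeval_eq_sum_range, Finset.sum_range_succ, hpm.coeff_natDegree, one_smul] at h3
    have h4 : ∑ i ∈ Finset.range p.natDegree, p.coeff i • t ^ i ∈ Q := by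
      refine Ideal.sum_mem _ fun i hi => ?_
      rw [smul_eq_mul]
      refine Ideal.mul_mem_right _ _ ?_
      have h5 : Ideal.span {s} ≤ Q := (Ideal.span_singleton_le_iff_mem _).mpr hsQ
      refine h5 (Ideal.pow_le_self ?_ (hpc i))
      have := Finset.mem_range.mp hi
      omega
    have h6 := (Ideal.add_mem_iff_right _ h4).mp h3
    exact Ideal.IsPrime.mem_of_pow_mem inferInstance _ h6
  have h3 : n ≤ Q := by
    by_cases hk0 : k = 0
    · subst hk0
      rw [pow_zero, Ideal.one_eq_top, top_le_iff] at hQle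
      exact absurd hQle (Ideal.IsPrime.ne_top inferInstance)
    · exact (Ideal.IsPrime.pow_le_iff hk0).mp hQle
  exact absurd (h2.trans_le hQ'n) (not_lt_of_ge h3)
end
end Cof

namespace Cof
open TensorProduct

section
variable {R : Type u} [CommRing R] [IsNoetherianRing R]

omit [IsNoetherianRing R] in
lemma adic_of_surj (I : Ideal R) (hI : I.FG) (k : ℕ) (s : AdicCompletion I R) :
    ∃ r : R, s - algebraMap R (AdicCompletion I R) r ∈ (I.map (algebraMap R (AdicCompletion I R))) ^ k := by
  obtain ⟨r, hr⟩ := Ideal.Quotient.mk_surjective (AdicCompletion.evalₐ I k s)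
  refine ⟨r, ?_⟩
  have h1 : AdicCompletion.evalₐ I k (s - algebraMap R (AdicCompletion I R) r) = 0 := by
    rw [map_sub, ← hr, AlgHom.commutes]
    simp
  have h2 : AdicCompletion.eval I R k (s - algebraMap R (AdicCompletion I R) r) = 0 := by
    rw [← AdicCompletion.factor_evalₐ_eq_eval I _ (by simp), h1, map_zero]
  have h3 : (s - algebraMap R (AdicCompletion I R) r) ∈ (I ^ k • ⊤ : Submodule R (AdicCompletion I R)) := by
    rw [AdicCompletion.pow_smul_top_eq_ker_eval hI]
    exact h2
  rw [Ideal.smul_top_eq_map] at h3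
  rw [← Ideal.map_pow]
  exact h3

lemma adic_noeth (I : Ideal R) : IsNoetherianRing (AdicCompletion I R) := by
  have hI : I.FG := IsNoetherian.noetherian I
  obtain ⟨n, x, hx⟩ := Submodule.fg_iff_exists_fin_generating_family.mp hI
  have hxI : ∀ i, x i ∈ I := fun i => hx ▸ Submodule.subset_span ⟨i, rfl⟩
  let ev : MvPolynomial (Fin n) R →ₐ[R] R := MvPolynomial.aeval x
  have hev : ∀ k, MvPolynomial.idealOfVars (Fin n) R ^ k ≤ (I ^ k).comap ev.toRingHom := by
    intro k
    rw [← Ideal.map_le_iff_le_comap, Ideal.map_pow]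
    refine Ideal.pow_right_mono ?_ k
    rw [Ideal.map_le_iff_le_comap, MvPolynomial.idealOfVars, Ideal.span_le]
    rintro _ ⟨i, rfl⟩
    simpa [ev] using hxI i
  let f : (k : ℕ) → MvPowerSeries (Fin n) R →+* R ⧸ I ^ k := fun k =>
    (Ideal.quotientMap (I ^ k) ev.toRingHom (hev k)).comp (MvPowerSeries.truncTotalAlgHom (Fin n) R k).toRingHom
  have hf0 : ∀ k p, f k p = Ideal.Quotient.mk (I ^ k) (ev (MvPowerSeries.truncTotal k p)) := fun k p => rfl
  have hf : ∀ {a b : ℕ} (hle : a ≤ b), (Ideal.Quotient.factorPow I hle).comp (f b) = f a := by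
    intro a b hle
    ext p
    rw [RingHom.comp_apply, hf0, hf0]
    change Ideal.Quotient.mk (I ^ a) _ = _
    rw [Ideal.Quotient.mk_eq_mk_iff_sub_mem, ← map_sub]
    exact hev a (MvPowerSeries.truncTotal_sub_truncTotal_mem_pow_idealOfVars hle le_rfl p)
  let φ : MvPowerSeries (Fin n) R →+* AdicCompletion I R := AdicCompletion.liftRingHom I f hf
  have hφ : ∀ p : MvPolynomial (Fin n) R, φ (p : MvPowerSeries (Fin n) R) = algebraMap R _ (ev p) := by
    intro p
    refine AdicCompletion.ext_evalₐ fun k => ?_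
    rw [AdicCompletion.evalₐ_liftRingHom, AlgHom.commutes]
    have := (MvPowerSeries.truncTotalAlgHom (Fin n) R k).commutes p
    change (Ideal.quotientMap (I ^ k) ev.toRingHom (hev k)) (MvPowerSeries.truncTotalAlgHom (Fin n) R k (p : MvPowerSeries (Fin n) R)) = _
    change MvPowerSeries.truncTotalAlgHom (Fin n) R k (p : MvPowerSeries (Fin n) R) = _ at this
    rw [this]
    rfl
  let J : Ideal (MvPowerSeries (Fin n) R) := Ideal.span (Set.range MvPowerSeries.X)
  have hJ : J.map φ = I.map (algebraMap R (AdicCompletion I R)) := by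
    have e1 : I.map (algebraMap R (AdicCompletion I R)) = (Ideal.span (Set.range x)).map (algebraMap R (AdicCompletion I R)) :=
      congrArg (Ideal.map (algebraMap R (AdicCompletion I R))) hx.symm
    rw [e1, Ideal.map_span, Ideal.map_span, ← Set.range_comp, ← Set.range_comp]
    congr 2
    ext1 i
    have := hφ (MvPolynomial.X i)
    rw [MvPolynomial.coe_X] at this
    simpa [ev] using this
  have := AdicCompletion.isAdicComplete_self I hI
  have hh : IsHausdorff (J.map φ) (AdicCompletion I R) := by rw [hJ]; infer_instance
  have hs : Function.Surjective φ := by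
    refine surjective_of_mk_map_comp_surjective (I := J) φ ?_
    intro z
    obtain ⟨s, rfl⟩ := Ideal.Quotient.mk_surjective z
    obtain ⟨r, hr⟩ := adic_of_surj I hI 1 s
    refine ⟨((MvPolynomial.C r : MvPolynomial (Fin n) R) : MvPowerSeries (Fin n) R), ?_⟩
    rw [RingHom.comp_apply, hφ]
    symm
    rw [Ideal.Quotient.mk_eq_mk_iff_sub_mem, hJ]
    simpa [ev] using hr
  exact isNoetherianRing_of_surjective _ _ φ hs

structure Cpl (m : Ideal R) (S : Type u) [CommRing S] [Algebra R S] : Prop where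
  noeth : IsNoetherianRing S
  flat : Module.Flat R S
  loc : IsLocalRing S
  maxl : m.map (algebraMap R S) = IsLocalRing.maximalIdeal S
  cpl : IsAdicComplete (m.map (algebraMap R S)) S
  approx : ∀ (k : ℕ) (s : S), ∃ r : R, s - algebraMap R S r ∈ (m.map (algebraMap R S)) ^ k

lemma Cpl.exists (m : Ideal R) [m.IsMaximal] : Cpl m (AdicCompletion m R) := by
  have hI : m.FG := IsNoetherian.noetherian m
  have h1 := AdicCompletion.isAdicComplete_self m hI
  have h2 := AdicCompletion.isMaximal_map_of_le m m le_rfl hI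
  have h3 := isLocalRing_of_isAdicComplete_maximal (m.map (algebraMap R (AdicCompletion m R)))
  exact ⟨adic_noeth m, inferInstance, h3, IsLocalRing.eq_maximalIdeal h2, h1, adic_of_surj m hI⟩

end
end Cof

namespace Cof
open TensorProduct

section
variable {R : Type u} [CommRing R] [IsNoetherianRing R] {m : Ideal R} [hm : m.IsMaximal]
  {S : Type u} [CommRing S] [Algebra R S]

lemma Cpl.comap_max (h : Cpl m S) : True ∧ ∀ Q : Ideal S, Q ≠ ⊤ → m.map (algebraMap R S) ≤ Q → Q.comap (algebraMap R S) = m := by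
  refine ⟨trivial, fun Q hQ hle => ?_⟩
  exact (hm.eq_of_le (fun ht => hQ ((Ideal.eq_top_iff_one _).mpr (by
    have : (1:R) ∈ Q.comap (algebraMap R S) := ht ▸ trivial
    simpa using this))) (Ideal.map_le_iff_le_comap.mp hle)).symm

lemma Cpl.dim2 (h : Cpl m S) (a : Ideal R) (ha : Dim2 a) : Dim2 (a.map (algebraMap R S)) := by
  have := h.noeth
  have := h.loc
  set n := IsLocalRing.maximalIdeal S with hn
  have hnm : n.comap (algebraMap R S) = m := h.comap_max.2 n (IsLocalRing.maximalIdeal.isMaximal S).ne_top h.maxl.le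
  obtain ⟨y, hym, hy⟩ := avoid m {q | q ∈ a.minimalPrimes ∧ ¬ m ≤ q}
    ((Ideal.finite_minimalPrimes_of_isNoetherianRing R a).subset fun q hq => hq.1) (fun q hq => ⟨hq.1.1.1, hq.2⟩)
  obtain ⟨z, hzm, hz⟩ := avoid m {q | q ∈ (a ⊔ Ideal.span {y}).minimalPrimes ∧ ¬ m ≤ q}
    ((Ideal.finite_minimalPrimes_of_isNoetherianRing R _).subset fun q hq => hq.1) (fun q hq => ⟨hq.1.1.1, hq.2⟩)
  have key : ∀ q : Ideal R, q.IsPrime → a ≤ q → y ∈ q → z ∈ q → q ≤ m → m ≤ q := by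
    intro q hq haq hyq hzq hqm
    by_contra hmq
    have hlt : q < m := lt_of_le_not_ge hqm hmq
    have h1 : a ⊔ Ideal.span {y} ≤ q := sup_le haq ((Ideal.span_singleton_le_iff_mem _).mpr hyq)
    obtain ⟨q1, hq1, hq1q⟩ := Ideal.exists_minimalPrimes_le h1
    have hq1lt : q1 < q := lt_of_le_of_ne hq1q (by rintro rfl; exact hz _ ⟨hq1, hmq⟩ hzq)
    have haq1 : a ≤ q1 := le_sup_left.trans hq1.1.2
    have hyq1 : y ∈ q1 := hq1.1.2 (Ideal.mem_sup_right (Ideal.mem_span_singleton_self y))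
    have hmq1 : ¬ m ≤ q1 := fun hh => hmq (hh.trans hq1q)
    have := hq1.1.1
    obtain ⟨q0, hq0, hq0q⟩ := Ideal.exists_minimalPrimes_le haq1
    have hq0lt : q0 < q1 := lt_of_le_of_ne hq0q (by rintro rfl; exact hy _ ⟨hq0, hmq1⟩ hyq1)
    exact ha q0 q1 q m hq0.1.1 hq1.1.1 hq hm.isPrime hq0.1.2 hq0lt hq1lt hlt
  have keyS : ∀ Q : Ideal S, Q.IsPrime → a.map (algebraMap R S) ≤ Q → algebraMap R S y ∈ Q → algebraMap R S z ∈ Q → Q = n := by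
    intro Q hQ haQ hyQ hzQ
    refine le_antisymm (IsLocalRing.le_maximalIdeal hQ.ne_top) ?_
    rw [hn, ← h.maxl, Ideal.map_le_iff_le_comap]
    refine key _ (Ideal.IsPrime.comap _) (Ideal.map_le_iff_le_comap.mp haQ) hyQ hzQ ?_
    rw [← hnm]
    exact Ideal.comap_mono (IsLocalRing.le_maximalIdeal hQ.ne_top)
  intro P0 P1 P2 P3 hP0 hP1 hP2 hP3 haP h01 h12 h23
  let π := Ideal.Quotient.mk P0
  have hπ : Function.Surjective π := Ideal.Quotient.mk_surjective
  have hP3n : P3 ≤ n := IsLocalRing.le_maximalIdeal hP3.ne_top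
  have cm : ∀ Q : Ideal S, P0 ≤ Q → (Q.map π).comap π = Q := by
    intro Q hQ
    rw [Ideal.comap_map_of_surjective' π hπ, Ideal.mk_ker, sup_eq_left]
    exact hQ
  have pr : ∀ Q : Ideal S, Q.IsPrime → P0 ≤ Q → (Q.map π).IsPrime := by
    intro Q hQ hle
    exact Ideal.map_isPrime_of_surjective hπ (by rw [Ideal.mk_ker]; exact hle)
  have lt' : ∀ Q Q' : Ideal S, P0 ≤ Q → Q < Q' → Q.map π < Q'.map π := by
    intro Q Q' hQ hlt
    refine lt_of_le_of_ne (Ideal.map_mono hlt.le) fun he => hlt.ne ?_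
    rw [← cm Q hQ, he, cm Q' (hQ.trans hlt.le)]
  have q0 := pr P0 hP0 le_rfl
  have q1 := pr P1 hP1 h01.le
  have q2 := pr P2 hP2 (h01.le.trans h12.le)
  have q3 := pr P3 hP3 (h01.le.trans (h12.le.trans h23.le))
  have e1 := Ideal.height_add_one_le_of_lt_of_isPrime (lt' P0 P1 le_rfl h01)
  have e2 := Ideal.height_add_one_le_of_lt_of_isPrime (lt' P1 P2 h01.le h12)
  have e3 := Ideal.height_add_one_le_of_lt_of_isPrime (lt' P2 P3 (h01.le.trans h12.le) h23)
  have e4 : (P3.map π).height ≤ (n.map π).height := Ideal.height_mono (Ideal.map_mono hP3n)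
  classical
  have hP0n : P0 ≤ n := IsLocalRing.le_maximalIdeal hP0.ne_top
  have hmin : n.map π ∈ (Ideal.span (({π (algebraMap R S y), π (algebraMap R S z)} : Finset (S ⧸ P0)) : Set (S ⧸ P0))).minimalPrimes := by
    refine ⟨⟨pr n inferInstance hP0n, ?_⟩, ?_⟩
    · rw [Ideal.span_le]
      intro w hw
      simp only [Finset.coe_insert, Finset.coe_singleton, Set.mem_insert_iff, Set.mem_singleton_iff] at hw
      rcases hw with rfl | rfl
      · refine Ideal.mem_map_of_mem _ ?_
        have : y ∈ n.comap (algebraMap R S) := hnm ▸ hym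
        exact this
      · refine Ideal.mem_map_of_mem _ ?_
        have : z ∈ n.comap (algebraMap R S) := hnm ▸ hzm
        exact this
    · intro Q hQ _
      have hQp := hQ.1
      have hc : P0 ≤ Q.comap π := by
        intro t ht
        rw [Ideal.mem_comap, show π t = 0 from Ideal.Quotient.eq_zero_iff_mem.mpr ht]
        exact Q.zero_mem
      have hQn := keyS (Q.comap π) (Ideal.IsPrime.comap _) (haP.trans hc) (hQ.2 (Ideal.subset_span (by simp)))
        (hQ.2 (Ideal.subset_span (by simp)))
      rw [← hQn, Ideal.map_comap_of_surjective π hπ]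
  have e5 := Ideal.height_le_card_of_mem_minimalPrimes_span_finset hmin
  have e6 : ((({π (algebraMap R S y), π (algebraMap R S z)} : Finset (S ⧸ P0)).card : ℕ) : ℕ∞) ≤ (2:ℕ) := by
    exact_mod_cast Finset.card_le_two
  have e7 : ((3:ℕ) : ℕ∞) ≤ (P3.map π).height := by
    calc ((3:ℕ) : ℕ∞) = 0 + 1 + 1 + 1 := by norm_num
      _ ≤ (P0.map π).height + 1 + 1 + 1 := by gcongr; exact zero_le
      _ ≤ (P1.map π).height + 1 + 1 := by gcongr
      _ ≤ (P2.map π).height + 1 := by gcongr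
      _ ≤ _ := e3
  have e8 := e7.trans (e4.trans (e5.trans e6))
  have : (3:ℕ) ≤ 2 := by exact_mod_cast e8
  omega

variable {D : Type u} [AddCommGroup D] [Module R D]

omit hm in
lemma Cpl.act (h : Cpl m S) (hD : ATor m D) (s : S) (y : S ⊗[R] D) : ∃ r : R, s • y = r • y := by
  have := h.flat
  obtain ⟨k, hk⟩ := bc_ATor S D m hD y
  obtain ⟨r, hr⟩ := h.approx k s
  refine ⟨r, ?_⟩
  have := hk _ hr
  rw [sub_smul, sub_eq_zero, algebraMap_smul] at this
  exact this

omit hm in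
lemma Cpl.surj (h : Cpl m S) (hD : ATor m D) : Function.Surjective (TensorProduct.mk R S D 1) := by
  intro z
  induction z using TensorProduct.induction_on with
  | zero => exact ⟨0, by simp⟩
  | add x y hx hy =>
    obtain ⟨a, rfl⟩ := hx
    obtain ⟨b, rfl⟩ := hy
    exact ⟨a + b, map_add _ _ _⟩
  | tmul s d =>
    obtain ⟨r, hr⟩ := h.act hD s ((1 : S) ⊗ₜ[R] d)
    refine ⟨r • d, ?_⟩
    rw [map_smul, TensorProduct.mk_apply, ← hr, TensorProduct.smul_tmul', smul_eq_mul, mul_one]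

lemma Cpl.inj (h : Cpl m S) (hD : ATor m D) : Function.Injective (TensorProduct.mk R S D 1) := by
  have := h.flat
  have := h.loc
  rw [injective_iff_map_eq_zero]
  intro d hd
  by_contra hd0
  obtain ⟨k, hk⟩ := hD d
  let I : Ideal R := LinearMap.ker (LinearMap.toSpanSingleton R D d)
  have hIm : I ≤ m := by
    by_contra hcon
    have h1 : I ⊔ m = ⊤ := by
      rw [sup_comm]; exact hm.1.2 _ (lt_of_le_of_ne le_sup_left (fun he => hcon (by rw [he]; exact le_sup_right)))
    have h2 : I ⊔ m ^ k = ⊤ := by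
      have := Ideal.sup_pow_eq_top (n := k) h1
      exact this
    have h3 : m ^ k ≤ I := fun r hr => by simpa [I] using hk r hr
    rw [sup_eq_left.mpr h3] at h2
    have : (1:R) ∈ I := h2 ▸ trivial
    simp [I] at this
    exact hd0 this
  let g : (R ⧸ I) →ₗ[R] D := I.liftQ (LinearMap.toSpanSingleton R D d) le_rfl
  have hg : Function.Injective g := by
    rw [← LinearMap.ker_eq_bot]
    exact Submodule.ker_liftQ_eq_bot _ _ _ le_rfl
  have hg2 := Module.Flat.lTensor_preserves_injective_linearMap (M := S) g hg
  have h0 : (1:S) ⊗ₜ[R] (Submodule.Quotient.mk (p := I) (1:R)) = 0 := by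
    apply hg2
    rw [map_zero, LinearMap.lTensor_tmul]
    have : g (Submodule.Quotient.mk (p := I) (1:R)) = d := by
      change I.liftQ (LinearMap.toSpanSingleton R D d) le_rfl (Submodule.Quotient.mk (p := I) (1:R)) = d
      rw [Submodule.liftQ_apply]; simp
    rw [this]; exact hd
  have h1 : (1:S) ⊗ₜ[R] (1 : R ⧸ m) = 0 := by
    have := congrArg (LinearMap.lTensor S (Submodule.factor hIm)) h0
    rw [map_zero, LinearMap.lTensor_tmul] at this
    exact this
  have h2 := congrArg (Algebra.TensorProduct.quotIdealMapEquivTensorQuot S m).symm h1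
  have h3 : (Algebra.TensorProduct.quotIdealMapEquivTensorQuot S m).symm ((1:S) ⊗ₜ[R] (1 : R ⧸ m)) = 1 :=
    map_one (Algebra.TensorProduct.quotIdealMapEquivTensorQuot S m).symm
  rw [h3, map_zero] at h2
  have h4 : m.map (algebraMap R S) = ⊤ := by
    rw [Ideal.eq_top_iff_one, ← Ideal.Quotient.eq_zero_iff_mem, map_one]
    exact h2
  rw [h.maxl] at h4
  exact (IsLocalRing.maximalIdeal.isMaximal S).ne_top h4

lemma Cpl.minNF (h : Cpl m S) (hD : ATor m D) (hmin : MinNF R D) : MinNF S (S ⊗[R] D) := by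
  refine ⟨fun hf => hmin.1 ?_, fun V hV => ?_⟩
  · obtain ⟨n, g, hg⟩ := Submodule.fg_iff_exists_fin_generating_family.mp hf.1
    let U : Submodule R (S ⊗[R] D) := Submodule.span R (Set.range g)
    have hU : ∀ z, z ∈ U := by
      intro z
      have : z ∈ Submodule.span S (Set.range g) := hg ▸ trivial
      induction this using Submodule.span_induction with
      | mem x hx => exact Submodule.subset_span hx
      | zero => exact U.zero_mem
      | add x y _ _ hx hy => exact U.add_mem hx hy
      | smul s x _ hx =>
        obtain ⟨r, hr⟩ := h.act hD s x
        rw [hr]; exact U.smul_mem r hx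
    have : Module.Finite R (S ⊗[R] D) := ⟨by
      have : U = ⊤ := eq_top_iff.mpr fun z _ => hU z
      rw [← this]
      exact Submodule.fg_span (Set.finite_range g)⟩
    exact Module.Finite.of_injective (TensorProduct.mk R S D 1) (h.inj hD)
  · let U : Submodule R D := (V.restrictScalars R).comap (TensorProduct.mk R S D 1)
    have hU : U ≠ ⊤ := by
      intro ht
      apply hV
      rw [eq_top_iff]
      intro z _
      obtain ⟨d, rfl⟩ := h.surj hD z
      have : d ∈ U := ht ▸ trivial
      exact this
    have h1 : ((V.restrictScalars R)).FG := by
      have := (hmin.2 U hU).map (TensorProduct.mk R S D 1)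
      rwa [Submodule.map_comap_eq_of_surjective (h.surj hD)] at this
    exact Submodule.FG.of_restrictScalars R h1
end
end Cof

namespace Cof
open TensorProduct

section
variable {R : Type u} [CommRing R] [IsNoetherianRing R]

lemma tor_equiv_fin {X Y : Type u} [AddCommGroup X] [Module R X] [AddCommGroup Y] [Module R Y] (y : R) (e : X ≃ₗ[R] Y)
    (h : Module.Finite R (tor y Y)) : Module.Finite R (tor y X) := by
  refine Module.Finite.of_injective ((e.toLinearMap ∘ₗ (tor y X).subtype).codRestrict (tor y Y) ?_) ?_
  · intro x
    have := x.2
    simp only [LinearMap.mem_ker, LinearMap.smul_apply, LinearMap.id_apply] at this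
    simp only [LinearMap.mem_ker, LinearMap.smul_apply, LinearMap.id_apply, LinearMap.comp_apply, Submodule.subtype_apply]
    rw [LinearEquiv.coe_coe, ← map_smul, this, map_zero]
  · intro x x' hx
    exact Subtype.ext (e.injective (congrArg Subtype.val hx))

theorem dimTwo (a : Ideal R) (hd : Dim2 a) (M : Type u) [AddCommGroup M] [Module R M] (hM : ATor a M)
    (h : ∀ i ≤ 2, Module.Finite R (E R (R ⧸ a) M i)) (j : ℕ) : Module.Finite R (E R (R ⧸ a) M j) := by
  obtain ⟨F, hF, hQ⟩ := stepA a hd M hM h j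
  set X := E R (R ⧸ a) M j with hX
  suffices hfin : Module.Finite R (X ⧸ F) by
    have : Module.Finite R F := Module.Finite.iff_fg.mpr hF
    exact Module.Finite.of_submodule_quotient F
  by_contra hnf
  obtain ⟨D, hDmin⟩ := exists_minNF (X ⧸ F) hnf
  obtain ⟨m, hm, hDm⟩ := hDmin.local
  let S := AdicCompletion m R
  have hS : Cpl m S := Cpl.exists m
  have := hS.noeth
  have := hS.flat
  have := hS.loc
  have := hS.cpl
  have hSD : MinNF S (S ⊗[R] D) := hS.minNF hDm hDmin
  have hSDt := bc_ATor S D m hDm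
  let P : Ideal S := Module.annihilator S (S ⊗[R] D)
  have hP : ∀ s : S, (∀ d : S ⊗[R] D, s • d = 0) → s ∈ P := fun s hs => Module.mem_annihilator.mpr hs
  set b := a.map (algebraMap R S) with hb
  have hd2 : Dim2 b := hS.dim2 a hd
  by_cases hT : ∀ q ∈ T2 b, q.IsPrime ∧ ¬ P ≤ q
  · obtain ⟨y, hyP, hy⟩ := avoid P (T2 b) (T2.finite b) hT
    have hy0 : ∀ d : S ⊗[R] D, y • d = 0 := Module.mem_annihilator.mp hyP
    have h1 : Module.Finite S (tor y (E S (S ⧸ b) (S ⊗[R] M) j)) :=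
      cons b y (hd2.dim1 y hy) (S ⊗[R] M) (bc_ATor S M a hM) (fun i hi => bc_fin S M a i (h i hi)) j
    obtain ⟨e⟩ := bcQuot S M a j
    have h2 : Module.Finite S (tor y (S ⊗[R] X)) := tor_equiv_fin y e h1
    let π : S ⊗[R] X →ₗ[S] S ⊗[R] (X ⧸ F) := F.mkQ.baseChange S
    have hπ : Function.Surjective π := LinearMap.lTensor_surjective S F.mkQ_surjective
    let ι : S ⊗[R] F →ₗ[S] S ⊗[R] X := F.subtype.baseChange S
    have hex : Function.Exact ι π := lTensor_exact S (LinearMap.exact_subtype_mkQ F) F.mkQ_surjective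
    have hker : (LinearMap.ker π).FG := by
      rw [hex.linearMap_ker_eq]
      have : Module.Finite R F := Module.Finite.iff_fg.mpr hF
      exact Module.Finite.iff_fg.mp inferInstance
    have h3 := tor_quot_fin y (LinearMap.ker π) hker h2
    let e2 := π.quotKerEquivOfSurjective hπ
    let κ : S ⊗[R] D →ₗ[S] S ⊗[R] (X ⧸ F) := D.subtype.baseChange S
    have hκ : Function.Injective κ := Module.Flat.lTensor_preserves_injective_linearMap (M := S) D.subtype D.subtype_injective
    apply hSD.1
    refine Module.Finite.of_injective ((e2.symm.toLinearMap ∘ₗ κ).codRestrict (tor y (S ⊗[R] X ⧸ LinearMap.ker π)) ?_) ?_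
    · intro x
      simp only [LinearMap.mem_ker, LinearMap.smul_apply, LinearMap.id_apply, LinearMap.comp_apply]
      rw [← map_smul, ← map_smul, hy0, map_zero, map_zero]
    · intro x x' hx
      exact hκ (e2.symm.injective (congrArg Subtype.val hx))
  · push Not at hT
    obtain ⟨q, hq, hPq⟩ := hT
    have hqp := T2.prime q hq
    obtain ⟨-, q1, q2, hq1, hq2, h01, h12⟩ := hq
    exact lemmaB (m.map (algebraMap R S)) hS.maxl hSD hSDt q q1 q2 h01 h12 (fun s hs => hPq hqp (hP s hs))
end
end Cof

namespace Cof

section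
variable {R : Type u} [CommRing R]

lemma dim2_of_krull (a : Ideal R) (hdim : ringKrullDim (R ⧸ a) ≤ 2) : Dim2 a := by
  intro p q r s hp hq hr hs hap hpq hqr hrs
  rw [ringKrullDim_quotient] at hdim
  let P : PrimeSpectrum.zeroLocus (a : Set R) := ⟨⟨p, hp⟩, hap⟩
  let Q : PrimeSpectrum.zeroLocus (a : Set R) := ⟨⟨q, hq⟩, hap.trans hpq.le⟩
  let R' : PrimeSpectrum.zeroLocus (a : Set R) := ⟨⟨r, hr⟩, hap.trans (hpq.trans hqr).le⟩
  let S : PrimeSpectrum.zeroLocus (a : Set R) := ⟨⟨s, hs⟩, hap.trans (hpq.trans (hqr.trans hrs)).le⟩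
  have h1 : P < Q := hpq
  have h2 : Q < R' := hqr
  have h3 : R' < S := hrs
  let c1 : LTSeries (PrimeSpectrum.zeroLocus (a : Set R)) := (RelSeries.singleton _ P).snoc Q h1
  let c2 := c1.snoc R' (by rw [show c1.last = Q from RelSeries.last_snoc _ _ _]; exact h2)
  let c : LTSeries (PrimeSpectrum.zeroLocus (a : Set R)) :=
    c2.snoc S (by rw [show c2.last = R' from RelSeries.last_snoc _ _ _]; exact h3)
  have := (Order.LTSeries.length_le_krullDim c).trans hdim
  have hl : c.length = 3 := rfl
  rw [hl] at this
  exact absurd this (by decide)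

lemma ator_of_supp [IsNoetherianRing R] (a : Ideal R) (M : Type u) [AddCommGroup M] [Module R M]
    (hsupp : Module.support R M ⊆ PrimeSpectrum.zeroLocus (a : Set R)) : ATor a M := by
  intro m
  have h : a ≤ ((R ∙ m).annihilator).radical := by
    rw [Ideal.radical_eq_sInf]
    refine le_sInf fun J hJ => ?_
    exact hsupp (a := ⟨J, hJ.2⟩) (Module.mem_support_iff_exists_annihilator.mpr ⟨m, hJ.1⟩)
  obtain ⟨n, hn⟩ := Ideal.exists_pow_le_of_le_radical_of_fg h (IsNoetherian.noetherian a)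
  exact ⟨n, fun r hr => Submodule.mem_annihilator_span_singleton m r |>.mp (hn hr)⟩

section ext
open CochainComplex HomComplex

lemma extMk_zero_inj {X Y : ModuleCat.{u} R} (P : ProjectiveResolution X) (f : P.complex.X 0 ⟶ Y) (m : ℕ) (hm : 0 + 1 = m)
    (hf : P.complex.d m 0 ≫ f = 0) (h : P.extMk f m hm hf = 0) : f = 0 := by
  rw [← P.extEquivCohomologyClass.apply_eq_iff_eq,
    ProjectiveResolution.extEquivCohomologyClass_extMk,
    ProjectiveResolution.extEquivCohomologyClass_zero, CohomologyClass.mk_eq_zero_iff] at h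
  rw [Cocycle.toSingleMk_mem_coboundaries_iff _ _ _ _ _ 1 (by lia)] at h
  obtain ⟨g, hg⟩ := h
  have hz : Limits.IsZero (P.cochainComplex.X 1) := CochainComplex.isZero_of_isStrictlyLE _ 0 1
  rw [hz.eq_of_src g 0, Limits.comp_zero] at hg
  exact (cancel_epi (P.cochainComplexXIso (-(0:ℕ)) 0 rfl).hom).mp (by rw [← hg, Limits.comp_zero])

lemma smul_extMk {X Y : ModuleCat.{u} R} (P : ProjectiveResolution X) {n : ℕ} (r : R) (f : P.complex.X n ⟶ Y)
    (hf : P.complex.d (n+1) n ≫ f = 0) (hf' : P.complex.d (n+1) n ≫ (r • f) = 0) :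
    P.extMk (r • f) (n+1) rfl hf' = r • P.extMk f (n+1) rfl hf := by
  rw [Abelian.Ext.smul_eq_comp_mk₀, ProjectiveResolution.extMk_comp_mk₀]
  congr 1

/-- cocycles to ext classes -/
noncomputable def theta {X Y : ModuleCat.{u} R} (P : ProjectiveResolution X) (j n : ℕ) :
    LinearMap.ker ((P.complex.linearYonedaObj R Y).sc' j n (n+1)).g.hom →ₗ[R] Abelian.Ext X Y n where
  toFun f := P.extMk (Y := Y) f.1 (n+1) rfl f.2
  map_add' f g := (P.add_extMk (Y := Y) f.1 g.1 _ rfl f.2 g.2).symm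
  map_smul' r f := smul_extMk (Y := Y) P r f.1 f.2 (r • f).2

lemma theta_surj {X Y : ModuleCat.{u} R} (P : ProjectiveResolution X) (j n : ℕ) :
    Function.Surjective (theta (Y := Y) P j n) := by
  intro α
  obtain ⟨f, hf, rfl⟩ := P.extMk_surjective α (n+1) rfl
  exact ⟨⟨f, hf⟩, rfl⟩

lemma theta_ker {X Y : ModuleCat.{u} R} (P : ProjectiveResolution X) (j n : ℕ) (hj : (ComplexShape.up ℕ).prev n = j) :
    LinearMap.ker (theta (Y := Y) P j n) =
      LinearMap.range ((P.complex.linearYonedaObj R Y).sc' j n (n+1)).moduleCatToCycles := by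
  ext f
  rw [LinearMap.mem_ker, LinearMap.mem_range]
  cases n with
  | zero =>
    constructor
    · intro h
      have := extMk_zero_inj (Y := Y) P f.1 _ rfl f.2 h
      exact ⟨0, by rw [map_zero]; exact (Subtype.ext this).symm⟩
    · rintro ⟨g, rfl⟩
      have : ((P.complex.linearYonedaObj R Y).sc' j 0 1).moduleCatToCycles g = 0 := by
        apply Subtype.ext
        have h0 : (P.complex.linearYonedaObj R Y).d j 0 = 0 := (P.complex.linearYonedaObj R Y).shape _ _ (by simp)
        change ((P.complex.linearYonedaObj R Y).d j 0).hom g = 0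
        rw [h0]; rfl
      rw [this, map_zero]
  | succ p =>
    have hj : j = p := by rw [← hj]; simp
    subst hj
    constructor
    · intro h
      obtain ⟨g, hg⟩ := (P.extMk_eq_zero_iff (Y := Y) f.1 _ rfl f.2 j rfl).mp h
      exact ⟨g, Subtype.ext hg⟩
    · rintro ⟨g, hg⟩
      exact (P.extMk_eq_zero_iff (Y := Y) f.1 _ rfl f.2 j rfl).mpr ⟨g, congrArg Subtype.val hg⟩

lemma finite_oldExt_iff {X Y : ModuleCat.{u} R} (n : ℕ) :
    Module.Finite R (((Ext R (ModuleCat.{u} R) n).obj (Opposite.op X)).obj Y) ↔ Module.Finite R (Abelian.Ext X Y n) := by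
  let P := ProjectiveResolution.of X
  let K := P.complex.linearYonedaObj R Y
  let j := (ComplexShape.up ℕ).prev n
  have hn : (ComplexShape.up ℕ).next n = n + 1 := by simp
  let e : ((Ext R (ModuleCat.{u} R) n).obj (Opposite.op X)).obj Y ≅ (K.sc' j n (n+1)).moduleCatLeftHomologyData.H :=
    P.isoExt n Y ≪≫ ShortComplex.homologyMapIso (K.isoSc' j n (n+1) rfl hn) ≪≫ ShortComplex.moduleCatHomologyIso _
  let e2 := (Submodule.quotEquivOfEq _ _ (theta_ker (Y := Y) P j n rfl)).symm.trans
    ((theta (Y := Y) P j n).quotKerEquivOfSurjective (theta_surj P j n))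
  exact Module.Finite.equiv_iff (e.toLinearEquiv.trans e2)

end ext
end
end Cof

theorem stmt1 {R : Type u} [CommRing R] [IsNoetherianRing R] (a : Ideal R) (ha : a ≠ ⊤)
    (hdim : ringKrullDim (R ⧸ a) ≤ 2) (M : ModuleCat.{u} R)
    (hsupp : Module.support R M ⊆ PrimeSpectrum.zeroLocus (a : Set R)) :
    IsCofinite a M ↔
      (Module.Finite R (extQuot a 0 M) ∧ Module.Finite R (extQuot a 1 M) ∧
        Module.Finite R (extQuot a 2 M)) := by
  constructor
  · intro h
    exact ⟨h.2 0, h.2 1, h.2 2⟩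
  · rintro ⟨h0, h1, h2⟩
    refine ⟨hsupp, fun j => (Cof.finite_oldExt_iff j).mpr ?_⟩
    refine Cof.dimTwo a (Cof.dim2_of_krull a hdim) M (Cof.ator_of_supp a M hsupp) (fun i hi => ?_) j
    refine (Cof.finite_oldExt_iff (X := ModuleCat.of R (R ⧸ a)) (Y := M) i).mp ?_
    interval_cases i
    · exact h0
    · exact h1
    · exact h2
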